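/- arXiv:1412.6406 — 3 statements merged into one kernel-verified Lean document; each statement's English description precedes it below -/
import Mathlib

section
/- Let ε > 0 and let s_0 > s_1 ≥ 0. Then there exists a classical abstract Swiss cheese A = ((a_n, r_n)) with a_0 = a_1, r_0 = s_0, r_1 = s_1 and ρ_ann(A) = ∑_{n ≥ 2} r_n < ε, such that R(X_A) has no non-zero bounded point derivation at any point of X_A. -/
open Metric Set

/-- `R₀(X)`: the restrictions to `X` of rational functions with poles off `X`, i.e. quotients
`p/q` of complex polynomials with `q` nonvanishing on `X`. -/
def R0set (X : Set ℂ) : Set C(X, ℂ) :=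
  {f | ∃ p q : Polynomial ℂ, (∀ x : X, q.eval (x : ℂ) ≠ 0) ∧
    ∀ x : X, f x = p.eval (x : ℂ) / q.eval (x : ℂ)}

/-- `R(X)`: the uniform closure in `C(X, ℂ)` of the rational functions with poles off `X`.
(On the compact space `X` the topology of `C(X, ℂ)` is that of uniform convergence.) -/
noncomputable def Rx (X : Set ℂ) [CompactSpace X] : Subalgebra ℂ C(X, ℂ) :=
  (Algebra.adjoin ℂ (R0set X)).topologicalClosure

/-- A bounded point derivation on `R(X)` at `x`: a continuous linear functional `d` on `R(X)`
satisfying `d(fg) = f(x)d(g) + d(f)g(x)` for all `f, g ∈ R(X)`. -/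
def IsBPD (X : Set ℂ) [CompactSpace X] (x : X) (d : Rx X →L[ℂ] ℂ) : Prop :=
  ∀ f g : Rx X, d (f * g) = (f : C(X, ℂ)) x * d g + d f * (g : C(X, ℂ)) x

/-- `R(X)` is regular: for every closed `E ⊆ X` and `x ∈ X ∖ E` there is `f ∈ R(X)` with
`f(x) = 1` and `f ≡ 0` on `E`. -/
def RxRegular (X : Set ℂ) [CompactSpace X] : Prop :=
  ∀ E : Set X, IsClosed E → ∀ x : X, x ∉ E →
    ∃ f ∈ Rx X, f x = 1 ∧ ∀ y ∈ E, f y = 0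

open Metric Set

/-- An abstract Swiss cheese: a sequence `((a_n, r_n))_{n ≥ 0}` of centres `a n ∈ ℂ` and
non-negative radii `r n ∈ [0, ∞)`. -/
structure SwissCheese where
  a : ℕ → ℂ
  r : ℕ → ℝ
  r_nonneg : ∀ n, 0 ≤ r n

namespace SwissCheese

/-- The associated Swiss cheese set `X_A = closedBall(a₀, r₀) ∖ ⋃_{n ≥ 1} ball(a_n, r_n)`. -/
def cheeseSet (A : SwissCheese) : Set ℂ :=
  closedBall (A.a 0) (A.r 0) \ ⋃ n ∈ Set.Ici 1, ball (A.a n) (A.r n)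

/-- The significant index set `S_A = {n ≥ 1 : r_n > 0}`. -/
def sig (A : SwissCheese) : Set ℕ := {n | 1 ≤ n ∧ 0 < A.r n}

/-- The radius sum `ρ(A) = ∑_{n ≥ 1} r_n` is finite. -/
def RadSummable (A : SwissCheese) : Prop := Summable fun n => A.r (n + 1)

/-- The radius sum `ρ(A) = ∑_{n ≥ 1} r_n`. -/
noncomputable def radSum (A : SwissCheese) : ℝ := ∑' n, A.r (n + 1)

/-- The discrepancy `δ₁(A) = r₀ − ∑_{n ≥ 1} r_n`. -/
noncomputable def disc (A : SwissCheese) : ℝ := A.r 0 - A.radSum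

/-- `A` is classical: `ρ(A) < ∞`, `r₀ > 0`, each significant closed disk is contained in
`ball(a₀, r₀)`, and distinct significant closed disks are disjoint. -/
def IsClassical (A : SwissCheese) : Prop :=
  A.RadSummable ∧ 0 < A.r 0 ∧ ∀ k ∈ A.sig,
    closedBall (A.a k) (A.r k) ⊆ ball (A.a 0) (A.r 0) ∧
    ∀ l ∈ A.sig, l ≠ k → closedBall (A.a k) (A.r k) ∩ closedBall (A.a l) (A.r l) = ∅

/-- `A` is semiclassical: `ρ(A) < ∞`, `r₀ > 0`, each significant open disk is contained in
`ball(a₀, r₀)`, and distinct significant open disks are disjoint. -/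
def IsSemiclassical (A : SwissCheese) : Prop :=
  A.RadSummable ∧ 0 < A.r 0 ∧ ∀ k ∈ A.sig,
    ball (A.a k) (A.r k) ⊆ ball (A.a 0) (A.r 0) ∧
    ∀ l ∈ A.sig, l ≠ k → ball (A.a k) (A.r k) ∩ ball (A.a l) (A.r l) = ∅

/-- `A` is annular: `a₀ = a₁` and `r₀ > r₁ > 0`. -/
def IsAnnular (A : SwissCheese) : Prop := A.a 0 = A.a 1 ∧ A.r 1 < A.r 0 ∧ 0 < A.r 1

/-- The annular radius sum `ρ_ann(A) = ∑_{n ≥ 2} r_n`. -/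
noncomputable def annRadSum (A : SwissCheese) : ℝ := ∑' n, A.r (n + 2)

/-- The annular discrepancy `δ_ann(A) = r₀ − r₁ − 2 ∑_{n ≥ 2} r_n`. -/
noncomputable def annDisc (A : SwissCheese) : ℝ := A.r 0 - A.r 1 - 2 * A.annRadSum

/-- `A` is redundancy-free: every significant open disk meets `closedBall(a₀, r₀)`, and no
significant open disk is contained in another one. -/
def IsRedundancyFree (A : SwissCheese) : Prop :=
  ∀ k ∈ A.sig, (ball (A.a k) (A.r k) ∩ closedBall (A.a 0) (A.r 0)).Nonempty ∧
    ∀ l ∈ A.sig, l ≠ k → ¬ ball (A.a k) (A.r k) ⊆ ball (A.a l) (A.r l)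

/-- `H_A(U)`: the set of significant indices whose closed disk meets `U`. -/
def HSet (A : SwissCheese) (U : Set ℂ) : Set ℕ :=
  {n | n ∈ A.sig ∧ (closedBall (A.a n) (A.r n) ∩ U).Nonempty}

/-- `ρ_U(A) = ∑_{n ∈ H_A(U)} r_n`. -/
noncomputable def rhoU (A : SwissCheese) (U : Set ℂ) : ℝ := ∑' n : A.HSet U, A.r n

/-- The error set `E(A)`. -/
def errorSet (A : SwissCheese) : Set ℂ :=
  (⋃ m ∈ A.sig, ⋃ n ∈ A.sig, ⋃ _ : m ≠ n,
      closedBall (A.a m) (A.r m) ∩ closedBall (A.a n) (A.r n)) ∪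
    ⋃ n ∈ A.sig, (ball (A.a 0) (A.r 0))ᶜ ∩ closedBall (A.a n) (A.r n)

/-- A Swiss cheese set is compact. -/
instance (A : SwissCheese) : CompactSpace A.cheeseSet :=
  isCompact_iff_compactSpace.mp
    ((isCompact_closedBall _ _).diff (isOpen_biUnion fun _ _ => isOpen_ball))

end SwissCheese

/-!
A bounded point derivation `d` on `R(X)` is determined by `d(Z)`, where `Z` is the coordinate
function, and `d(1 / (c - Z)) = d(Z) / (c - x) ^ 2` for `c ∉ X`. Testing `d` on sums
`∑ λ_c / (c - z)` shows that `d(Z) = 0` as soon as there are finite families of centres `c ∉ X` and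
weights `r_c ≥ 0` for which `∑ r_c / |z - c|` is bounded on `X`, uniformly in the family, while
`∑ r_c / |x - c| ^ 2` is arbitrarily large.

Starting from the annulus, the `n`-th step removes discs of radius `r = c h ^ 2` about the points of
a square lattice of spacing `h` that are well inside the set `X n` left over by the previous steps.
If `c` is small, their total radius is small and `∑ r / |z - a| ≤ 2` off the discs. On the other
hand `X n` satisfies an interior corkscrew condition, so every dyadic annulus about a point `z` of
`X n`, at scales between `h` and a constant depending on `X n`, contains a fixed proportion of
lattice points inside `X n` and contributes a fixed multiple of `c` to `∑ r / |z - a| ^ 2`. Hence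
this sum is at least `n` once `h` is small. Only finitely many disjoint closed discs in the interior
were removed, so the corkscrew condition persists and the construction can be iterated.
-/

section PointDerivation

variable {X : Set ℂ} [CompactSpace X]

lemma R0set_subset_Rx : R0set X ⊆ Rx X :=
  Algebra.subset_adjoin.trans (Algebra.adjoin ℂ (R0set X)).le_topologicalClosure

variable (X) in
/-- The coordinate function `Z : z ↦ z`, as an element of `R(X)`. The polynomials and the functions
`z ↦ (a - z)⁻¹` in `R(X)` are then written `Polynomial.aeval Z p` and `resolvent Z a`. -/
def coordFun : Rx X :=
  ⟨⟨Subtype.val, continuous_subtype_val⟩, R0set_subset_Rx ⟨.X, 1, by simp, by simp⟩⟩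

lemma aeval_coordFun_apply (p : Polynomial ℂ) (z : X) :
    ((Polynomial.aeval (coordFun X) p : Rx X) : C(X, ℂ)) z = p.eval (z : ℂ) := by
  simp [coordFun]

lemma mem_resolventSet_coordFun {a : ℂ} (ha : a ∉ X) : a ∈ resolventSet ℂ (coordFun X) := by
  have hne (z : X) : a - z ≠ 0 := sub_ne_zero.2 fun h => ha (h ▸ z.2)
  let g : C(X, ℂ) := ⟨fun z => 1 / (a - z), by fun_prop (disch := exact hne _)⟩
  have hg : g ∈ Rx X :=
    R0set_subset_Rx ⟨1, .C a - .X, by simpa using hne, fun z => by simp [g]⟩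
  have hinv : (algebraMap ℂ (Rx X) a - coordFun X) * ⟨g, hg⟩ = 1 := by
    ext z
    exact mul_one_div_cancel (hne z)
  exact spectrum.mem_resolventSet_of_left_right_inverse hinv (by rwa [mul_comm] at hinv)

lemma algebraMap_sub_coordFun_mul_resolvent {a : ℂ} (ha : a ∉ X) :
    (algebraMap ℂ (Rx X) a - coordFun X) * resolvent (coordFun X) a = 1 :=
  Ring.mul_inverse_cancel _ (mem_resolventSet_coordFun ha)

lemma resolvent_coordFun_apply {a : ℂ} (ha : a ∉ X) (z : X) :
    ((resolvent (coordFun X) a : Rx X) : C(X, ℂ)) z = (a - z)⁻¹ :=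
  eq_inv_of_mul_eq_one_right
    (congrArg (fun f : Rx X => (f : C(X, ℂ)) z) (algebraMap_sub_coordFun_mul_resolvent ha))

namespace IsBPD

variable {x : X} {d : Rx X →L[ℂ] ℂ}

lemma map_algebraMap (hd : IsBPD X x d) (a : ℂ) : d (algebraMap ℂ (Rx X) a) = 0 := by
  have hone : d 1 = 0 := by simpa using hd 1 1
  rw [Algebra.algebraMap_eq_smul_one, map_smul, hone, smul_zero]

/-- The kernel of a bounded point derivation, as a subalgebra of `R(X)`. It is closed, so it is all
of `R(X)` once it contains the rational functions. -/
def kernel (hd : IsBPD X x d) : Subalgebra ℂ (Rx X) where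
  carrier := {f | d f = 0}
  add_mem' {f g} hf hg := by simp_all
  mul_mem' {f g} hf hg := by simp_all [hd f g]
  algebraMap_mem' := hd.map_algebraMap

lemma mem_kernel_of_mul_mem_kernel (hd : IsBPD X x d) {f g : Rx X} (hg : g ∈ hd.kernel)
    (hgx : (g : C(X, ℂ)) x ≠ 0) (hfg : f * g ∈ hd.kernel) : f ∈ hd.kernel := by
  have hg : d g = 0 := hg
  have hfg : d (f * g) = 0 := hfg
  rw [hd, hg, mul_zero, zero_add] at hfg
  exact (mul_eq_zero.1 hfg).resolve_right hgx

lemma aeval_coordFun_mem_kernel (hd : IsBPD X x d) (hZ : d (coordFun X) = 0)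
    (p : Polynomial ℂ) : Polynomial.aeval (coordFun X) p ∈ hd.kernel :=
  Algebra.adjoin_le (S := hd.kernel) (singleton_subset_iff.2 hZ)
    (Polynomial.aeval_mem_adjoin_singleton ℂ _)

lemma R0set_subset_map_kernel (hd : IsBPD X x d) (hZ : d (coordFun X) = 0) :
    R0set X ⊆ hd.kernel.map (Rx X).val := by
  intro f hf
  obtain ⟨p, q, hq, hfpq⟩ := id hf
  refine ⟨⟨f, R0set_subset_Rx hf⟩, ?_, rfl⟩
  have hmul : ⟨f, R0set_subset_Rx hf⟩ * Polynomial.aeval (coordFun X) q =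
      Polynomial.aeval (coordFun X) p := by
    ext z
    change f z * _ = _
    rw [aeval_coordFun_apply, aeval_coordFun_apply, hfpq, div_mul_cancel₀ _ (hq z)]
  refine hd.mem_kernel_of_mul_mem_kernel (hd.aeval_coordFun_mem_kernel hZ q) ?_
    (hmul ▸ hd.aeval_coordFun_mem_kernel hZ p)
  rw [aeval_coordFun_apply]
  exact hq x

lemma eq_zero_of_apply_coordFun (hd : IsBPD X x d) (hZ : d (coordFun X) = 0) : d = 0 := by
  have hclosed : IsClosed (hd.kernel.map (Rx X).val : Set C(X, ℂ)) :=
    (Subalgebra.isClosed_topologicalClosure _).isClosedEmbedding_subtypeVal.isClosedMap _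
      (isClosed_singleton.preimage d.continuous)
  have hle : Rx X ≤ hd.kernel.map (Rx X).val :=
    Subalgebra.topologicalClosure_minimal
      (Algebra.adjoin_le (hd.R0set_subset_map_kernel hZ)) hclosed
  ext f
  obtain ⟨g, hg, hgf⟩ := hle f.2
  exact Subtype.ext hgf ▸ hg

lemma apply_resolvent (hd : IsBPD X x d) {a : ℂ} (ha : a ∉ X) :
    d (resolvent (coordFun X) a) = d (coordFun X) / (a - x) ^ 2 := by
  have hne : a - x ≠ 0 := sub_ne_zero.2 fun h => ha (h ▸ x.2)
  have hleibniz := hd (algebraMap ℂ (Rx X) a - coordFun X) (resolvent (coordFun X) a)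
  have hx : ((algebraMap ℂ (Rx X) a - coordFun X : Rx X) : C(X, ℂ)) x = a - x := rfl
  have hone : d 1 = 0 := by simpa using hd.map_algebraMap 1
  rw [algebraMap_sub_coordFun_mul_resolvent ha, hone, map_sub, hd.map_algebraMap, hx,
    resolvent_coordFun_apply ha] at hleibniz
  field_simp at hleibniz ⊢
  linear_combination -hleibniz

/-- Test `d` on `∑ λ_c / (c - z)`, with `λ_c` of modulus `r_c` chosen such that all the terms
`λ_c / (c - x) ^ 2` of the derivative at `x` are positive. -/
lemma norm_apply_coordFun_mul_sum_le (hd : IsBPD X x d) {C : Finset ℂ} (hC : ∀ c ∈ C, c ∉ X)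
    {r : ℂ → ℝ} (hr : ∀ c ∈ C, 0 ≤ r c) {B : ℝ} (hB : ∀ z ∈ X, ∑ c ∈ C, r c / ‖z - c‖ ≤ B) :
    ‖d (coordFun X)‖ * ∑ c ∈ C, r c / ‖x - c‖ ^ 2 ≤ ‖d‖ * B := by
  have hne (c : ℂ) (hc : c ∈ C) : c - x ≠ 0 := sub_ne_zero.2 fun h => hC c hc (h ▸ x.2)
  let wt (c : ℂ) : ℂ := r c * (c - x) ^ 2 / ‖c - x‖ ^ 2
  have norm_wt (c : ℂ) (hc : c ∈ C) : ‖wt c‖ = r c := by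
    have := norm_ne_zero_iff.2 (hne c hc)
    simp [wt, abs_of_nonneg (hr c hc), this]
  let F : Rx X := ∑ c ∈ C, wt c • resolvent (coordFun X) c
  have norm_F_le : ‖F‖ ≤ B := by
    have hB0 : 0 ≤ B :=
      (Finset.sum_nonneg fun c hc => div_nonneg (hr c hc) (norm_nonneg _)).trans (hB x x.2)
    refine (ContinuousMap.norm_le (F : C(X, ℂ)) hB0).2 fun z => ?_
    calc ‖(F : C(X, ℂ)) z‖
        = ‖∑ c ∈ C, wt c * ((resolvent (coordFun X) c : Rx X) : C(X, ℂ)) z‖ := by simp [F]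
      _ ≤ ∑ c ∈ C, ‖wt c * ((resolvent (coordFun X) c : Rx X) : C(X, ℂ)) z‖ := norm_sum_le _ _
      _ = ∑ c ∈ C, r c / ‖z - c‖ := Finset.sum_congr rfl fun c hc => by
          rw [norm_mul, norm_wt c hc, resolvent_coordFun_apply (hC c hc), norm_inv,
            norm_sub_rev, div_eq_mul_inv]
      _ ≤ B := hB z z.2
  have apply_F : d F = d (coordFun X) * (∑ c ∈ C, r c / ‖x - c‖ ^ 2 : ℝ) := by
    simp only [F, map_sum, map_smul, Complex.ofReal_sum, Finset.mul_sum]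
    refine Finset.sum_congr rfl fun c hc => ?_
    have := hne c hc
    rw [hd.apply_resolvent (hC c hc), norm_sub_rev]
    simp only [wt, smul_eq_mul]
    push_cast
    field_simp
  calc ‖d (coordFun X)‖ * ∑ c ∈ C, r c / ‖x - c‖ ^ 2
      ≤ ‖d (coordFun X)‖ * ‖((∑ c ∈ C, r c / ‖x - c‖ ^ 2 : ℝ) : ℂ)‖ := by
        gcongr
        exact (le_abs_self _).trans_eq (Complex.norm_real _).symm
    _ = ‖d F‖ := by rw [apply_F, norm_mul]
    _ ≤ ‖d‖ * B := d.le_opNorm_of_le norm_F_le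

lemma eq_zero_of_forall_exists_le_sum (hd : IsBPD X x d) {B : ℝ}
    (h : ∀ M : ℝ, ∃ (C : Finset ℂ) (r : ℂ → ℝ), (∀ c ∈ C, c ∉ X ∧ 0 ≤ r c) ∧
      (∀ z ∈ X, ∑ c ∈ C, r c / ‖z - c‖ ≤ B) ∧ M ≤ ∑ c ∈ C, r c / ‖x - c‖ ^ 2) :
    d = 0 := by
  refine hd.eq_zero_of_apply_coordFun (by_contra fun hZ => ?_)
  have hZpos : 0 < ‖d (coordFun X)‖ := norm_pos_iff.2 hZ
  obtain ⟨C, r, hC, hB, hM⟩ := h ((‖d‖ * B + 1) / ‖d (coordFun X)‖)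
  have hle := hd.norm_apply_coordFun_mul_sum_le (fun c hc => (hC c hc).1)
    (fun c hc => (hC c hc).2) hB
  rw [div_le_iff₀' hZpos] at hM
  linarith

end IsBPD

end PointDerivation

section Corkscrew

open Filter Topology

/-- The (uniform) interior corkscrew condition: for all small `t`, every point of `X` is at distance
`t` from the centre of a ball of radius `t / 2` contained in `X`. It provides room for discs inside
`X` at every small scale around every point. -/
def IsCorkscrew {E : Type*} [PseudoMetricSpace E] (X : Set E) : Prop :=
  ∀ᶠ t in 𝓝[>] (0 : ℝ), ∀ x ∈ X, ∃ y, dist y x = t ∧ ball y (t / 2) ⊆ X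

variable {E : Type*} [NormedAddCommGroup E] [NormedSpace ℝ E]

lemma exists_norm_eq_one_forall_norm_add_smul [Nontrivial E] (v : E) :
    ∃ u : E, ‖u‖ = 1 ∧ ∀ t : ℝ, ‖v + t • u‖ = |‖v‖ + t| := by
  obtain ⟨u, hu, hvu⟩ : ∃ u : E, ‖u‖ = 1 ∧ ‖v‖ • u = v := by
    rcases eq_or_ne v 0 with rfl | hv
    · obtain ⟨u, hu⟩ := exists_norm_eq E zero_le_one
      exact ⟨u, hu, by simp⟩
    · exact ⟨‖v‖⁻¹ • v, norm_smul_inv_norm hv, smul_inv_smul₀ (norm_ne_zero_iff.2 hv) v⟩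
  refine ⟨u, hu, fun t => ?_⟩
  nth_rw 1 [← hvu]
  rw [← add_smul, norm_smul, hu, mul_one, Real.norm_eq_abs]

lemma isCorkscrew_closedBall [Nontrivial E] (a : E) {s : ℝ} (hs : 0 < s) :
    IsCorkscrew (closedBall a s) := by
  filter_upwards [Ioc_mem_nhdsGT (half_pos hs)] with t ⟨ht, hts⟩ x hx
  obtain ⟨u, hu, hnorm⟩ := exists_norm_eq_one_forall_norm_add_smul (x - a)
  refine ⟨x + (-t) • u, by simp [dist_eq_norm, norm_smul, hu, ht.le], ?_⟩
  refine ball_subset_closedBall.trans (closedBall_subset_closedBall' ?_)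
  have hdist : dist (x + (-t) • u) a = |‖x - a‖ + -t| := by
    rw [← hnorm, dist_eq_norm, add_sub_right_comm]
  rw [mem_closedBall_iff_norm] at hx
  have hle : |‖x - a‖ + -t| ≤ s - t / 2 :=
    abs_le.2 ⟨by linarith [norm_nonneg (x - a)], by linarith⟩
  linarith

lemma IsCorkscrew.sdiff_ball [Nontrivial E] [ProperSpace E] {X : Set E} (hX : IsCorkscrew X)
    {a : E} {r : ℝ} (hr : 0 ≤ r) (h : closedBall a r ⊆ interior X) :
    IsCorkscrew (X \ ball a r) := by
  obtain ⟨δ, hδ, hδX⟩ :=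
    (isCompact_closedBall a r).exists_cthickening_subset_open isOpen_interior h
  rw [cthickening_closedBall hδ.le hr] at hδX
  filter_upwards [hX, Ioc_mem_nhdsGT (show 0 < δ / 4 by positivity)] with t hXt ⟨ht, htδ⟩ x hx
  have hrx : r ≤ dist x a := not_lt.1 hx.2
  rcases lt_or_ge (dist x a) (r + δ / 2) with hnear | hfar
  · obtain ⟨u, hu, hnorm⟩ := exists_norm_eq_one_forall_norm_add_smul (x - a)
    have hdist : dist (x + t • u) a = dist x a + t := by
      rw [dist_eq_norm, add_sub_right_comm, hnorm, ← dist_eq_norm, abs_of_nonneg (by positivity)]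
    refine ⟨x + t • u, by simp [dist_eq_norm, norm_smul, hu, ht.le], subset_sdiff.2 ⟨?_, ?_⟩⟩
    · refine Subset.trans ?_ (hδX.trans interior_subset)
      exact ball_subset_closedBall.trans (closedBall_subset_closedBall' (by linarith))
    · exact ball_disjoint_ball (by linarith)
  · obtain ⟨y, hyx, hyX⟩ := hXt x hx.1
    refine ⟨y, hyx, subset_sdiff.2 ⟨hyX, ball_disjoint_ball ?_⟩⟩
    linarith [dist_triangle_left x a y]

lemma isCorkscrew_closedBall_sdiff_ball [Nontrivial E] [ProperSpace E] (a : E) {s₀ s₁ : ℝ}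
    (hs₁ : 0 ≤ s₁) (hs : s₁ < s₀) : IsCorkscrew (closedBall a s₀ \ ball a s₁) := by
  have hs₀ : 0 < s₀ := hs₁.trans_lt hs
  refine (isCorkscrew_closedBall a hs₀).sdiff_ball hs₁ ?_
  rw [interior_closedBall _ hs₀.ne']
  exact closedBall_subset_ball hs

lemma IsCorkscrew.sdiff_biUnion_ball [Nontrivial E] [ProperSpace E] {X : Set E}
    (hX : IsCorkscrew X) {ι : Type*} {c : ι → E} {r : ι → ℝ} {s : Finset ι}
    (hr : ∀ i ∈ s, 0 ≤ r i) (hsub : ∀ i ∈ s, closedBall (c i) (r i) ⊆ interior X)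
    (hdisj : (s : Set ι).PairwiseDisjoint fun i => closedBall (c i) (r i)) :
    IsCorkscrew (X \ ⋃ i ∈ s, ball (c i) (r i)) := by
  classical
  induction s using Finset.induction_on with
  | empty => simpa using hX
  | insert j s hj ih =>
    simp only [Finset.forall_mem_insert, Finset.coe_insert,
      pairwiseDisjoint_insert_of_notMem (Finset.mem_coe.not.2 hj)] at hr hsub hdisj
    rw [Finset.set_biUnion_insert, union_comm, ← sdiff_sdiff]
    refine (ih hr.2 hsub.2 hdisj.1).sdiff_ball hr.1 ?_
    have hopen : IsOpen (interior X \ ⋃ i ∈ s, closedBall (c i) (r i)) :=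
      isOpen_interior.sdiff (isClosed_biUnion_finset fun _ _ => isClosed_closedBall)
    have hball : closedBall (c j) (r j) ⊆ interior X \ ⋃ i ∈ s, closedBall (c i) (r i) :=
      subset_sdiff.2 ⟨hsub.1, disjoint_iUnion₂_right.2 hdisj.2⟩
    exact hball.trans (interior_maximal (sdiff_subset_sdiff interior_subset
      (iUnion₂_mono fun _ _ => ball_subset_closedBall)) hopen)

end Corkscrew

section Lattice

lemma norm_eq_max_natAbs (v : ℤ × ℤ) : ‖v‖ = (max v.1.natAbs v.2.natAbs : ℕ) := by
  simp [Prod.norm_def, Int.norm_eq_abs, Nat.cast_natAbs]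

lemma one_le_norm_of_ne_zero {v : ℤ × ℤ} (hv : v ≠ 0) : 1 ≤ ‖v‖ := by
  rw [norm_eq_max_natAbs, Nat.one_le_cast]
  rw [ne_eq, Prod.ext_iff, Prod.fst_zero, Prod.snd_zero] at hv
  omega

lemma sum_box_inv_norm_le (n : ℕ) : ∑ v ∈ (Finset.box (n + 1) : Finset (ℤ × ℤ)), ‖v‖⁻¹ ≤ 8 := by
  have hn : ((n + 1 : ℕ) : ℝ) ≠ 0 := by positivity
  rw [Finset.sum_congr rfl fun v hv => by rw [norm_eq_max_natAbs, Int.mem_box.1 hv],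
    Finset.sum_const, Int.card_box n.succ_ne_zero, nsmul_eq_mul]
  push_cast at hn ⊢
  rw [mul_inv_cancel_right₀ hn]

lemma sum_inv_norm_le (Q : Finset (ℤ × ℤ)) {K : ℕ} (hQ : ∀ v ∈ Q, ‖v‖ ≤ K) :
    ∑ v ∈ Q, ‖v‖⁻¹ ≤ 8 * K := by
  classical
  have hmaps : ∀ v ∈ Q, max v.1.natAbs v.2.natAbs ∈ Finset.range (K + 1) := fun v hv =>
    Finset.mem_range_succ_iff.2 (Nat.cast_le.1 ((norm_eq_max_natAbs v).ge.trans (hQ v hv)))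
  calc ∑ v ∈ Q, ‖v‖⁻¹
      = ∑ n ∈ Finset.range (K + 1), ∑ v ∈ Q with max v.1.natAbs v.2.natAbs = n, ‖v‖⁻¹ :=
        (Finset.sum_fiberwise_of_maps_to hmaps _).symm
    _ ≤ ∑ n ∈ Finset.range (K + 1), ∑ v ∈ (Finset.box n : Finset (ℤ × ℤ)), ‖v‖⁻¹ := by
        gcongr with n
        · exact fun v hv => Int.mem_box.2 (Finset.mem_filter.1 hv).2
    _ ≤ ∑ _n ∈ Finset.range K, 8 := by
        rw [Finset.sum_range_succ']
        simpa using Finset.sum_le_sum fun n (_ : n ∈ Finset.range K) => sum_box_inv_norm_le n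
    _ = 8 * K := by simp [mul_comm]

/-- The point of the square lattice `h • ℤ[i]` with integer coordinates `p`. The norm on the
index set `ℤ × ℤ` is the sup norm. -/
def latticePoint (h : ℝ) (p : ℤ × ℤ) : ℂ := ⟨h * p.1, h * p.2⟩

variable {h : ℝ}

lemma latticePoint_sub (p q : ℤ × ℤ) :
    latticePoint h (p - q) = latticePoint h p - latticePoint h q :=
  Complex.ext (by simp [latticePoint, mul_sub]) (by simp [latticePoint, mul_sub])

lemma mul_norm_le_norm_latticePoint (hh : 0 ≤ h) (p : ℤ × ℤ) :
    h * ‖p‖ ≤ ‖latticePoint h p‖ := by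
  rw [Prod.norm_def, mul_max_of_nonneg _ _ hh, Int.norm_eq_abs, Int.norm_eq_abs]
  refine max_le ?_ ?_
  · simpa [latticePoint, abs_mul, abs_of_nonneg hh] using Complex.abs_re_le_norm (latticePoint h p)
  · simpa [latticePoint, abs_mul, abs_of_nonneg hh] using Complex.abs_im_le_norm (latticePoint h p)

lemma le_norm_latticePoint_sub (hh : 0 ≤ h) {p q : ℤ × ℤ} (hpq : p ≠ q) :
    h ≤ ‖latticePoint h p - latticePoint h q‖ := by
  rw [← latticePoint_sub]
  exact (le_mul_of_one_le_right hh (one_le_norm_of_ne_zero (sub_ne_zero.2 hpq))).trans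
    (mul_norm_le_norm_latticePoint hh _)

/-- If the lattice point of `q ∈ P` is nearest to `z`, then the distance of `z` to that of `p` is
at least `h * ‖p - q‖ / 2`. -/
lemma sum_div_norm_sub_latticePoint_le (hh : 0 < h) {P : Finset (ℤ × ℤ)} {K : ℕ}
    (hP : ∀ p ∈ P, ∀ q ∈ P, ‖p - q‖ ≤ K) {r : ℝ} (hr : 0 ≤ r) {z : ℂ}
    (hz : ∀ p ∈ P, r ≤ ‖z - latticePoint h p‖) :
    ∑ p ∈ P, r / ‖z - latticePoint h p‖ ≤ 1 + 16 * K * (r / h) := by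
  rcases P.eq_empty_or_nonempty with rfl | hne
  · simp only [Finset.sum_empty]
    positivity
  obtain ⟨q, hq, hmin⟩ := P.exists_min_image (fun p => ‖z - latticePoint h p‖) hne
  have hdist : ∀ p ∈ P, h * ‖p - q‖ ≤ 2 * ‖z - latticePoint h p‖ := fun p hp => by
    have := mul_norm_le_norm_latticePoint hh.le (p - q)
    have htri := norm_sub_le_norm_sub_add_norm_sub (latticePoint h p) z (latticePoint h q)
    rw [latticePoint_sub] at this
    rw [norm_sub_rev _ z] at htri
    linarith [hmin p hp]
  have hterm : ∀ p ∈ P.erase q, r / ‖z - latticePoint h p‖ ≤ 2 * (r / h) * ‖p - q‖⁻¹ :=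
    fun p hp => by
      obtain ⟨hpq, hpP⟩ := Finset.mem_erase.1 hp
      have hpos : 0 < ‖p - q‖ := norm_pos_iff.2 (sub_ne_zero.2 hpq)
      calc r / ‖z - latticePoint h p‖ ≤ r / (h * ‖p - q‖ / 2) := by
            gcongr
            linarith [hdist p hpP]
        _ = 2 * (r / h) * ‖p - q‖⁻¹ := by field_simp
  have hsum : ∑ p ∈ P.erase q, ‖p - q‖⁻¹ ≤ 8 * K := by
    rw [← Finset.sum_image (f := fun v => ‖v‖⁻¹) (sub_left_injective (b := q)).injOn]
    exact sum_inv_norm_le _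
      (Finset.forall_mem_image.2 fun p hp => hP p (Finset.mem_of_mem_erase hp) q hq)
  rw [← Finset.add_sum_erase _ _ hq]
  refine add_le_add (div_le_one_of_le₀ (hz q hq) (norm_nonneg _)) ?_
  calc ∑ p ∈ P.erase q, r / ‖z - latticePoint h p‖
      ≤ 2 * (r / h) * ∑ p ∈ P.erase q, ‖p - q‖⁻¹ :=
        (Finset.sum_le_sum hterm).trans_eq (Finset.mul_sum _ _ _).symm
    _ ≤ 2 * (r / h) * (8 * K) := by gcongr
    _ = 16 * K * (r / h) := by ring

lemma le_card_Icc_ceil_floor (α : ℝ) {L : ℝ} (hL : 1 ≤ L) :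
    L ≤ (Finset.Icc ⌈α - L⌉ ⌊α + L⌋).card := by
  rw [Int.card_Icc]
  have hcard := Int.cast_mono (R := ℝ) (Int.self_le_toNat (⌊α + L⌋ + 1 - ⌈α - L⌉))
  push_cast at hcard
  linarith [Int.lt_floor_add_one (α + L), Int.ceil_lt_add_one (α - L)]

/-- The square of side `2 * L * h` centred at `y` lies in the disc, because `√2 < 3 / 2`. -/
lemma exists_finset_latticePoint_mem_ball (hh : 0 < h) {L : ℝ} (hL : 1 ≤ L) (y : ℂ) :
    ∃ S : Finset (ℤ × ℤ), (∀ p ∈ S, latticePoint h p ∈ ball y (3 / 2 * (L * h))) ∧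
      L ^ 2 ≤ S.card := by
  have hcoord {α : ℝ} {a : ℤ} (ha : a ∈ Finset.Icc ⌈α / h - L⌉ ⌊α / h + L⌋) :
      (h * a - α) ^ 2 ≤ (L * h) ^ 2 := by
    rw [Finset.mem_Icc, Int.ceil_le, Int.le_floor, sub_le_iff_le_add, ← sub_le_iff_le_add,
      ← sub_le_iff_le_add'] at ha
    have : h * a - α = (a - α / h) * h := by field_simp
    rw [this, mul_pow, mul_pow]
    gcongr ?_ * _
    exact sq_le_sq' (by linarith) (by linarith)
  refine ⟨Finset.Icc ⌈y.re / h - L⌉ ⌊y.re / h + L⌋ ×ˢ Finset.Icc ⌈y.im / h - L⌉ ⌊y.im / h + L⌋,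
    fun p hp => ?_, ?_⟩
  · obtain ⟨hre, him⟩ := Finset.mem_product.1 hp
    have : 0 < L * h := by positivity
    rw [mem_ball_iff_norm]
    refine lt_of_pow_lt_pow_left₀ 2 (by positivity) ?_
    rw [← Complex.normSq_eq_norm_sq, Complex.normSq_apply]
    simp only [latticePoint, Complex.sub_re, Complex.sub_im]
    nlinarith [hcoord hre, hcoord him]
  · rw [Finset.card_product, Nat.cast_mul, sq]
    gcongr <;> exact le_card_Icc_ceil_floor _ hL

/-- The disc about `y` contains at least a multiple of `(t / h) ^ 2` lattice points, each
contributing about `1 / t ^ 2`, so that the bound does not depend on the scale `t`. -/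
lemma le_sum_annulus_div_norm_sq (hh : 0 < h) {t : ℝ} (ht : 6 * h ≤ t) {x y : ℂ}
    (hyx : dist y x = t) {P : Finset (ℤ × ℤ)}
    (hP : ∀ p, latticePoint h p ∈ ball y (t / 4) → p ∈ P) :
    1 / (60 * h ^ 2) ≤
      ∑ p ∈ P with dist x (latticePoint h p) ∈ Ioo (3 / 4 * t) (5 / 4 * t),
        1 / ‖x - latticePoint h p‖ ^ 2 := by
  have ht0 : 0 < t := by linarith
  obtain ⟨S, hSball, hScard⟩ := exists_finset_latticePoint_mem_ball hh
    (L := t / (6 * h)) ((one_le_div (by positivity)).2 ht) y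
  rw [show 3 / 2 * (t / (6 * h) * h) = t / 4 by field_simp; norm_num] at hSball
  have hannulus {p : ℤ × ℤ} (hp : latticePoint h p ∈ ball y (t / 4)) :
      dist x (latticePoint h p) ∈ Ioo (3 / 4 * t) (5 / 4 * t) := by
    rw [mem_ball] at hp
    constructor
    · linarith [dist_triangle_right y x (latticePoint h p), dist_comm y (latticePoint h p)]
    · linarith [dist_triangle_right x (latticePoint h p) y, dist_comm x y]
  calc 1 / (60 * h ^ 2) ≤ (t / (6 * h)) ^ 2 * (1 / (5 / 4 * t) ^ 2) := by
        rw [show (t / (6 * h)) ^ 2 * (1 / (5 / 4 * t) ^ 2) = 1 / (225 / 4 * h ^ 2) by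
          field_simp; norm_num]
        gcongr
        norm_num
    _ ≤ S.card * (1 / (5 / 4 * t) ^ 2) := by gcongr
    _ = ∑ p ∈ S, 1 / (5 / 4 * t) ^ 2 := by rw [Finset.sum_const, nsmul_eq_mul]
    _ ≤ ∑ p ∈ S, 1 / ‖x - latticePoint h p‖ ^ 2 := Finset.sum_le_sum fun p hp => by
        have hpt := hannulus (hSball p hp)
        rw [dist_eq_norm] at hpt
        have : 0 < ‖x - latticePoint h p‖ := (by positivity : 0 < 3 / 4 * t).trans hpt.1
        gcongr
        exact hpt.2.le
    _ ≤ _ := Finset.sum_le_sum_of_subset_of_nonneg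
        (fun p hp => Finset.mem_filter.2 ⟨hP p (hSball p hp), hannulus (hSball p hp)⟩)
        fun _ _ _ => by positivity

lemma pairwise_disjoint_dyadic_Ioo {R : ℝ} (hR : 0 < R) :
    Pairwise fun i j : ℕ =>
      Disjoint (Ioo (3 / 4 * (R / 2 ^ i)) (5 / 4 * (R / 2 ^ i)))
        (Ioo (3 / 4 * (R / 2 ^ j)) (5 / 4 * (R / 2 ^ j))) := by
  refine (pairwise_disjoint_on _).2 fun i j hij => ?_
  have hle : R / 2 ^ j ≤ R / 2 ^ i / 2 := by
    rw [div_div, ← pow_succ]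
    gcongr
    · norm_num
    · exact hij
  have hpos : 0 < R / 2 ^ i := by positivity
  rw [disjoint_left]
  rintro s ⟨hs, -⟩ ⟨-, hs'⟩
  linarith

lemma nat_mul_le_sum_of_le_sum_dyadic {ι : Type*} {P : Finset ι} {f : ι → ℝ}
    (hf : ∀ p ∈ P, 0 ≤ f p) {ρ : ι → ℝ} {R κ : ℝ} (hR : 0 < R) {J : ℕ}
    (h : ∀ j < J, κ ≤ ∑ p ∈ P with ρ p ∈ Ioo (3 / 4 * (R / 2 ^ j)) (5 / 4 * (R / 2 ^ j)), f p) :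
    J * κ ≤ ∑ p ∈ P, f p := by
  classical
  let annulus (j : ℕ) : Finset ι :=
    P.filter fun p => ρ p ∈ Ioo (3 / 4 * (R / 2 ^ j)) (5 / 4 * (R / 2 ^ j))
  have hdisj : (Finset.range J : Set ℕ).PairwiseDisjoint annulus := fun i _ j _ hij =>
    Finset.disjoint_filter.2 fun _ _ hi => disjoint_left.1 (pairwise_disjoint_dyadic_Ioo hR hij) hi
  calc J * κ = ∑ _j ∈ Finset.range J, κ := by simp
    _ ≤ ∑ j ∈ Finset.range J, ∑ p ∈ annulus j, f p :=
        Finset.sum_le_sum fun j hj => h j (Finset.mem_range.1 hj)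
    _ = ∑ p ∈ (Finset.range J).biUnion annulus, f p := (Finset.sum_biUnion hdisj).symm
    _ ≤ ∑ p ∈ P, f p := Finset.sum_le_sum_of_subset_of_nonneg
        (Finset.biUnion_subset.2 fun _ _ => Finset.filter_subset _ _) fun p hp _ => hf p hp

end Lattice

section Perforation

/-- Finitely many pairwise disjoint closed discs of common radius `r > 0` in the interior of `X`,
given by the set `C` of their centres: the holes that are cut out of `X` in one step. -/
structure IsPerforation (X : Set ℂ) (C : Finset ℂ) (r : ℝ) : Prop where
  radius_pos : 0 < r
  closedBall_subset : ∀ c ∈ C, closedBall c r ⊆ interior X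
  pairwiseDisjoint : (C : Set ℂ).PairwiseDisjoint (closedBall · r)

open Classical in
/-- The indices `p` with `‖p‖ ≤ N` for which the closed disc of radius `h / 4` about the lattice
point lies in the interior of `X`; discs of smaller radius about these points are removed
from `X`. -/
noncomputable def innerLattice (X : Set ℂ) (h : ℝ) (N : ℕ) : Finset (ℤ × ℤ) :=
  {p ∈ Finset.Icc (-N, -N) (N, N) | closedBall (latticePoint h p) (h / 4) ⊆ interior X}

variable {X : Set ℂ} {c h r : ℝ} {N : ℕ}

lemma mem_innerLattice {p : ℤ × ℤ} :
    p ∈ innerLattice X h N ↔ ‖p‖ ≤ N ∧ closedBall (latticePoint h p) (h / 4) ⊆ interior X := by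
  classical
  rw [innerLattice, Finset.mem_filter, Finset.mem_Icc, norm_eq_max_natAbs, Nat.cast_le,
    Prod.le_def, Prod.le_def]
  grind

lemma card_innerLattice_le (hN : 1 ≤ N) : ((innerLattice X h N).card : ℝ) ≤ 9 * N ^ 2 := by
  have hcard : (innerLattice X h N).card ≤ (2 * N + 1) * (2 * N + 1) := by
    classical
    refine (Finset.card_filter_le _ _).trans_eq ?_
    rw [Finset.card_Icc_prod, Int.card_Icc]
    congr 1 <;> lia
  have : (innerLattice X h N).card ≤ 9 * N ^ 2 := by nlinarith
  exact_mod_cast this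

lemma mem_innerLattice_of_mem_ball (hh : 0 < h) (hXN : X ⊆ closedBall 0 (h * N))
    {y : ℂ} {t : ℝ} (ht : h < t) (hy : ball y (t / 2) ⊆ X) {p : ℤ × ℤ}
    (hp : latticePoint h p ∈ ball y (t / 4)) : p ∈ innerLattice X h N := by
  have hdisc : closedBall (latticePoint h p) (h / 4) ⊆ interior X :=
    (closedBall_subset_ball' (by linarith [mem_ball.1 hp])).trans (interior_maximal hy isOpen_ball)
  have hmem : latticePoint h p ∈ closedBall 0 (h * N) :=
    hXN (interior_subset (hdisc (mem_closedBall_self (by positivity))))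
  have hnorm : h * ‖p‖ ≤ h * N :=
    (mul_norm_le_norm_latticePoint hh.le p).trans (mem_closedBall_zero_iff.1 hmem)
  exact mem_innerLattice.2 ⟨le_of_mul_le_mul_left hnorm hh, hdisc⟩

lemma latticePoint_injective (hh : 0 < h) : Function.Injective (latticePoint h) := fun p q hpq =>
  by_contra fun hne => hh.not_ge <| by simpa [hpq] using le_norm_latticePoint_sub hh.le hne

lemma isPerforation_image_innerLattice (hr : 0 < r) (hrh : r ≤ h / 4) :
    IsPerforation X ((innerLattice X h N).image (latticePoint h)) r where
  radius_pos := hr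
  closedBall_subset := Finset.forall_mem_image.2 fun _ hp =>
    (closedBall_subset_closedBall hrh).trans (mem_innerLattice.1 hp).2
  pairwiseDisjoint := by
    rw [Finset.coe_image]
    rintro _ ⟨p, -, rfl⟩ _ ⟨q, -, rfl⟩ hpq
    refine closedBall_disjoint_closedBall ?_
    rw [dist_eq_norm]
    linarith [le_norm_latticePoint_sub (by linarith : 0 ≤ h) (ne_of_apply_ne _ hpq)]

lemma sum_innerLattice_div_norm_le (hh : 0 < h) (hr : 0 ≤ r) {z : ℂ}
    (hz : ∀ p ∈ innerLattice X h N, r ≤ ‖z - latticePoint h p‖) :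
    ∑ p ∈ innerLattice X h N, r / ‖z - latticePoint h p‖ ≤ 1 + 32 * N * (r / h) := by
  have hdiam : ∀ p ∈ innerLattice X h N, ∀ q ∈ innerLattice X h N, ‖p - q‖ ≤ (2 * N : ℕ) :=
    fun p hp q hq => (norm_sub_le p q).trans <| by
      push_cast
      linarith [(mem_innerLattice.1 hp).1, (mem_innerLattice.1 hq).1]
  refine (sum_div_norm_sub_latticePoint_le hh hdiam hr hz).trans_eq ?_
  push_cast
  ring

lemma le_sum_innerLattice_div_norm_sq (hh : 0 < h) (hXN : X ⊆ closedBall 0 (h * N))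
    {R : ℝ} (hX : ∀ t ∈ Ioc 0 R, ∀ x ∈ X, ∃ y, dist y x = t ∧ ball y (t / 2) ⊆ X)
    {J : ℕ} (hJ : 6 * h * 2 ^ J ≤ R) {x : ℂ} (hx : x ∈ X) :
    J * (1 / (60 * h ^ 2)) ≤ ∑ p ∈ innerLattice X h N, 1 / ‖x - latticePoint h p‖ ^ 2 := by
  have hR : 0 < R := (by positivity : 0 < 6 * h * 2 ^ J).trans_le hJ
  refine nat_mul_le_sum_of_le_sum_dyadic (ρ := fun p => dist x (latticePoint h p))
    (fun _ _ => by positivity) hR fun j hj => ?_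
  have hjR : 6 * h ≤ R / 2 ^ j := by
    rw [le_div_iff₀ (by positivity)]
    refine le_trans ?_ hJ
    gcongr
    norm_num
  obtain ⟨y, hyx, hyX⟩ := hX (R / 2 ^ j)
    ⟨by positivity, div_le_self hR.le (one_le_pow₀ one_le_two)⟩ x hx
  exact le_sum_annulus_div_norm_sq hh hjR hyx fun p hp =>
    mem_innerLattice_of_mem_ball hh hXN (by linarith) hyX hp

/-- The discs have radius `c * h ^ 2`. As the lattice spacing `h` tends to zero with `h * N` fixed,
only the last sum grows: each of the `J` dyadic scales above `h` adds a fixed multiple of `c`. -/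
lemma exists_isPerforation_radius_mul_sq (hh : 0 < h) (hN : 1 ≤ N)
    (hXN : X ⊆ closedBall 0 (h * N)) {R : ℝ}
    (hX : ∀ t ∈ Ioc 0 R, ∀ x ∈ X, ∃ y, dist y x = t ∧ ball y (t / 2) ⊆ X)
    {J : ℕ} (hJ : 6 * h * 2 ^ J ≤ R) (hc : 0 < c) (hch : c * h ≤ 1 / 4) :
    ∃ (C : Finset ℂ) (r : ℝ), IsPerforation X C r ∧ C.card * r ≤ 9 * (h * N) ^ 2 * c ∧
      ∀ z ∈ X \ ⋃ a ∈ C, ball a r,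
        ∑ a ∈ C, r / ‖z - a‖ ≤ 1 + 32 * (h * N) * c ∧ c * J / 60 ≤ ∑ a ∈ C, r / ‖z - a‖ ^ 2 := by
  have hsum (f : ℂ → ℝ) : ∑ a ∈ (innerLattice X h N).image (latticePoint h), f a =
      ∑ p ∈ innerLattice X h N, f (latticePoint h p) :=
    Finset.sum_image (latticePoint_injective hh).injOn
  refine ⟨(innerLattice X h N).image (latticePoint h), c * h ^ 2,
    isPerforation_image_innerLattice (by positivity) (by nlinarith), ?_, fun z hz => ⟨?_, ?_⟩⟩
  · calc _ ≤ 9 * N ^ 2 * (c * h ^ 2) := by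
          gcongr
          exact (Nat.cast_le.2 Finset.card_image_le).trans (card_innerLattice_le hN)
      _ = 9 * (h * N) ^ 2 * c := by ring
  · have hfar : ∀ p ∈ innerLattice X h N, c * h ^ 2 ≤ ‖z - latticePoint h p‖ := fun p hp => by
      by_contra! hlt
      exact hz.2 (mem_biUnion (Finset.mem_image_of_mem _ hp) (mem_ball_iff_norm.2 hlt))
    rw [hsum]
    refine (sum_innerLattice_div_norm_le hh (by positivity) hfar).trans_eq ?_
    field_simp
  · rw [hsum]
    calc c * J / 60 = c * h ^ 2 * (J * (1 / (60 * h ^ 2))) := by field_simp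
      _ ≤ c * h ^ 2 * ∑ p ∈ innerLattice X h N, 1 / ‖z - latticePoint h p‖ ^ 2 := by
          gcongr
          exact le_sum_innerLattice_div_norm_sq hh hXN hX hJ hz.1
      _ = _ := by simp only [Finset.mul_sum, mul_one_div]

lemma IsCorkscrew.exists_isPerforation (hX : IsCorkscrew X) (hb : Bornology.IsBounded X)
    {η : ℝ} (hη : 0 < η) (M : ℝ) :
    ∃ (C : Finset ℂ) (r : ℝ), IsPerforation X C r ∧ C.card * r ≤ η ∧
      ∀ z ∈ X \ ⋃ a ∈ C, ball a r,
        ∑ a ∈ C, r / ‖z - a‖ ≤ 2 ∧ M ≤ ∑ a ∈ C, r / ‖z - a‖ ^ 2 := by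
  obtain ⟨s, hs, hXs⟩ := hb.subset_closedBall_lt 0 0
  obtain ⟨R, hR, hXR⟩ := mem_nhdsGT_iff_exists_Ioc_subset.1 hX
  rw [mem_Ioi] at hR
  obtain ⟨c, hc, hcη, hcs⟩ : ∃ c > 0, 9 * s ^ 2 * c ≤ η ∧ 32 * s * c ≤ 1 :=
    ⟨min (η / (9 * s ^ 2)) (1 / (32 * s)), by positivity,
      (le_div_iff₀' (by positivity)).1 (min_le_left _ _),
      (le_div_iff₀' (by positivity)).1 (min_le_right _ _)⟩
  obtain ⟨J, hJ⟩ := exists_nat_ge (M * 60 / c)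
  obtain ⟨N, hN⟩ := exists_nat_ge (max 1 (6 * s * 2 ^ J / R))
  obtain ⟨hN1, hNR⟩ := max_le_iff.1 hN
  have hN0 : (0 : ℝ) < N := one_pos.trans_le hN1
  obtain ⟨h, hh, rfl⟩ : ∃ h > 0, h * N = s := ⟨s / N, by positivity, div_mul_cancel₀ _ hN0.ne'⟩
  have hhN : h ≤ h * N := le_mul_of_one_le_right hh.le hN1
  have hJR : 6 * h * 2 ^ J ≤ R := by
    rw [div_le_iff₀ hR] at hNR
    exact le_of_mul_le_mul_right (by linarith) hN0
  obtain ⟨C, r, hC, hcard, hsum⟩ := exists_isPerforation_radius_mul_sq hh (mod_cast hN1) hXs hXR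
    hJR hc (by nlinarith)
  rw [div_le_iff₀' hc] at hJ
  exact ⟨C, r, hC, hcard.trans hcη, fun z hz =>
    (hsum z hz).imp (·.trans (by linarith)) (le_trans (by linarith))⟩

end Perforation

section Iteration

open Function

lemma IsPerforation.isCorkscrew_sdiff {X : Set ℂ} {C : Finset ℂ} {r : ℝ}
    (hC : IsPerforation X C r) (hX : IsCorkscrew X) : IsCorkscrew (X \ ⋃ c ∈ C, ball c r) :=
  hX.sdiff_biUnion_ball (fun _ _ => hC.radius_pos.le) hC.closedBall_subset hC.pairwiseDisjoint

lemma disjoint_closedBall_interior_of_disjoint_ball {E : Type*} [NormedAddCommGroup E]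
    [NormedSpace ℝ E] {a : E} {r : ℝ} (hr : r ≠ 0) {Y : Set E} (h : Disjoint (ball a r) Y) :
    Disjoint (closedBall a r) (interior Y) := by
  rw [← closure_ball a hr]
  exact (h.mono_right interior_subset).closure_left isOpen_interior

/-- A decreasing sequence of sets, each obtained from the previous one by removing the discs of a
perforation: the construction whose limit is the Swiss cheese set. -/
structure IsPerforationSeq (X : ℕ → Set ℂ) (C : ℕ → Finset ℂ) (r : ℕ → ℝ) : Prop where
  isPerforation : ∀ n, IsPerforation (X n) (C n) (r n)
  succ_eq : ∀ n, X (n + 1) = X n \ ⋃ c ∈ C n, ball c (r n)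

namespace IsPerforationSeq

variable {X : ℕ → Set ℂ} {C : ℕ → Finset ℂ} {r : ℕ → ℝ}

lemma antitone (hX : IsPerforationSeq X C r) : Antitone X :=
  antitone_nat_of_succ_le fun n => (hX.succ_eq n).trans_subset sdiff_subset

lemma closedBall_subset (hX : IsPerforationSeq X C r) (i : Σ n, C n) :
    closedBall (i.2 : ℂ) (r i.1) ⊆ interior (X 0) :=
  ((hX.isPerforation i.1).closedBall_subset _ i.2.2).trans
    (interior_mono (hX.antitone (Nat.zero_le _)))

lemma disjoint_closedBall_of_lt (hX : IsPerforationSeq X C r) {m n : ℕ} (hmn : m < n) {a b : ℂ}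
    (ha : a ∈ C m) (hb : b ∈ C n) : Disjoint (closedBall a (r m)) (closedBall b (r n)) := by
  have hdisj : Disjoint (ball a (r m)) (X n) := by
    refine Disjoint.mono_right (hX.antitone (Nat.succ_le_iff.2 hmn)) ?_
    rw [Nat.succ_eq_add_one, hX.succ_eq]
    exact disjoint_sdiff_right.mono_left (subset_biUnion_of_mem (u := (ball · (r m))) ha)
  exact (disjoint_closedBall_interior_of_disjoint_ball (hX.isPerforation m).radius_pos.ne'
    hdisj).mono_right ((hX.isPerforation n).closedBall_subset b hb)

lemma pairwise_disjoint_closedBall (hX : IsPerforationSeq X C r) :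
    Pairwise (Disjoint on fun i : Σ n, C n => closedBall (i.2 : ℂ) (r i.1)) := by
  rintro ⟨m, a, ha⟩ ⟨n, b, hb⟩ hne
  rcases lt_trichotomy m n with hmn | rfl | hmn
  · exact hX.disjoint_closedBall_of_lt hmn ha hb
  · exact (hX.isPerforation m).pairwiseDisjoint ha hb (by simpa using hne)
  · exact (hX.disjoint_closedBall_of_lt hmn hb ha).symm

lemma hasSum_radius (hX : IsPerforationSeq X C r) {S : ℝ}
    (h : HasSum (fun n => (C n).card * r n) S) : HasSum (fun i : Σ n, C n => r i.1) S := by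
  have hfiber (n : ℕ) : HasSum (fun _ : C n => r n) ((C n).card * r n) := by
    simpa using hasSum_fintype fun _ : C n => r n
  have hsummable : Summable fun i : Σ n, C n => r i.1 :=
    (summable_sigma_of_nonneg fun i => (hX.isPerforation i.1).radius_pos.le).2
      ⟨fun n => (hfiber n).summable, by simpa only [(hfiber _).tsum_eq] using h.summable⟩
  exact h.sigma_of_hasSum hfiber hsummable

lemma subset_of_forall_disjoint (hX : IsPerforationSeq X C r) {Y : Set ℂ} (hY : Y ⊆ X 0)
    (h : ∀ i : Σ n, C n, Disjoint Y (ball (i.2 : ℂ) (r i.1))) (n : ℕ) : Y ⊆ X n := by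
  induction n with
  | zero => exact hY
  | succ n ih =>
    rw [hX.succ_eq]
    exact subset_sdiff.2 ⟨ih, disjoint_iUnion₂_right.2 fun c hc => h ⟨n, c, hc⟩⟩

end IsPerforationSeq

lemma IsCorkscrew.exists_isPerforationSeq {X₀ : Set ℂ} (hX₀ : IsCorkscrew X₀)
    (hb : Bornology.IsBounded X₀) {η : ℕ → ℝ} (hη : ∀ n, 0 < η n) (M : ℕ → ℝ) :
    ∃ (X : ℕ → Set ℂ) (C : ℕ → Finset ℂ) (r : ℕ → ℝ), X 0 = X₀ ∧ IsPerforationSeq X C r ∧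
      (∀ n, (C n).card * r n ≤ η n) ∧ ∀ n, ∀ z ∈ X (n + 1),
        ∑ c ∈ C n, r n / ‖z - c‖ ≤ 2 ∧ M n ≤ ∑ c ∈ C n, r n / ‖z - c‖ ^ 2 := by
  choose C r hC hcard hsum using fun (n : ℕ) (X : {X : Set ℂ // IsCorkscrew X ∧
    Bornology.IsBounded X}) => X.2.1.exists_isPerforation X.2.2 (hη n) (M n)
  let X (n : ℕ) : {X : Set ℂ // IsCorkscrew X ∧ Bornology.IsBounded X} :=
    Nat.rec ⟨X₀, hX₀, hb⟩ (fun n X => ⟨X \ ⋃ c ∈ C n X, ball c (r n X),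
      (hC n X).isCorkscrew_sdiff X.2.1, X.2.2.subset sdiff_subset⟩) n
  exact ⟨fun n => (X n).1, fun n => C n (X n), fun n => r n (X n), rfl,
    ⟨fun n => hC n (X n), fun _ => rfl⟩, fun n => hcard n (X n), fun n z hz => hsum n (X n) z hz⟩

lemma IsCorkscrew.exists_isPerforationSeq_hasSum_lt {X₀ : Set ℂ} (hX₀ : IsCorkscrew X₀)
    (hb : Bornology.IsBounded X₀) {ε : ℝ} (hε : 0 < ε) (M : ℕ → ℝ) :
    ∃ (X : ℕ → Set ℂ) (C : ℕ → Finset ℂ) (r : ℕ → ℝ), X 0 = X₀ ∧ IsPerforationSeq X C r ∧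
      (∃ S < ε, HasSum (fun i : Σ n, C n => r i.1) S) ∧ ∀ n, ∀ z ∈ X (n + 1),
        ∑ c ∈ C n, r n / ‖z - c‖ ≤ 2 ∧ M n ≤ ∑ c ∈ C n, r n / ‖z - c‖ ^ 2 := by
  obtain ⟨η, hη, T, hT, hTε⟩ := posSumOfEncodable (half_pos hε) ℕ
  obtain ⟨X, C, r, hX0, hX, hcard, hsum⟩ := hX₀.exists_isPerforationSeq hb hη M
  have hnonneg (n : ℕ) : 0 ≤ (C n).card * r n :=
    mul_nonneg (Nat.cast_nonneg _) (hX.isPerforation n).radius_pos.le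
  have hsummable : Summable fun n => (C n).card * r n := .of_nonneg_of_le hnonneg hcard hT.summable
  have hle : ∑' n, (C n).card * r n ≤ T := hasSum_le hcard hsummable.hasSum hT
  exact ⟨X, C, r, hX0, hX, ⟨_, by linarith, hX.hasSum_radius hsummable.hasSum⟩, hsum⟩

end Iteration

namespace SwissCheese

open Encodable Function

variable {ι : Type*} [Encodable ι] {a : ℂ} {s₀ s₁ : ℝ} {hs₀ : 0 ≤ s₀} {hs₁ : 0 ≤ s₁}
  {c : ι → ℂ} {ρ : ι → ℝ} {hρ : ∀ i, 0 ≤ ρ i}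

/-- The abstract Swiss cheese with `a₀ = a₁ = a`, `r₀ = s₀`, `r₁ = s₁`, whose further discs are
`ball (c i) (ρ i)`, placed at the index `encode i + 2`; the remaining indices have radius `0`. It
turns a countable family of discs in an annulus into an abstract Swiss cheese. -/
noncomputable def ofAnnulus (a : ℂ) (hs₀ : 0 ≤ s₀) (hs₁ : 0 ≤ s₁) (c : ι → ℂ) {ρ : ι → ℝ}
    (hρ : ∀ i, 0 ≤ ρ i) : SwissCheese where
  a
    | 0 | 1 => a
    | n + 2 => extend encode c 0 n
  r
    | 0 => s₀
    | 1 => s₁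
    | n + 2 => extend encode ρ 0 n
  r_nonneg
    | 0 => hs₀
    | 1 => hs₁
    | n + 2 => show 0 ≤ extend encode ρ 0 n by
      classical
      rw [extend_def]
      split_ifs
      exacts [hρ _, le_rfl]

lemma ofAnnulus_a_encode (i : ι) : (ofAnnulus a hs₀ hs₁ c hρ).a (encode i + 2) = c i :=
  encode_injective.extend_apply c 0 i

lemma ofAnnulus_r_encode (i : ι) : (ofAnnulus a hs₀ hs₁ c hρ).r (encode i + 2) = ρ i :=
  encode_injective.extend_apply ρ 0 i

lemma eq_one_or_exists_encode_of_mem_sig_ofAnnulus {n : ℕ}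
    (hn : n ∈ (ofAnnulus a hs₀ hs₁ c hρ).sig) : n = 1 ∨ ∃ i : ι, encode i + 2 = n := by
  obtain ⟨hn1, hr⟩ := hn
  match n with
  | 1 => exact .inl rfl
  | n + 2 =>
    have hn : ∃ i : ι, encode i = n := by_contra fun hne =>
      hr.ne' (extend_apply' ρ (0 : ℕ → ℝ) n hne)
    exact .inr (hn.imp fun _ => congrArg (· + 2))

lemma hasSum_r_ofAnnulus {S : ℝ} (hS : HasSum ρ S) :
    HasSum (fun n => (ofAnnulus a hs₀ hs₁ c hρ).r (n + 2)) S :=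
  (hasSum_extend_zero encode_injective).2 hS

lemma disjoint_cheeseSet_ball (A : SwissCheese) {n : ℕ} (hn : 1 ≤ n) :
    Disjoint A.cheeseSet (ball (A.a n) (A.r n)) :=
  disjoint_sdiff_left.mono_right (subset_biUnion_of_mem (u := fun n => ball (A.a n) (A.r n)) hn)

lemma cheeseSet_ofAnnulus_subset :
    (ofAnnulus a hs₀ hs₁ c hρ).cheeseSet ⊆ closedBall a s₀ \ ball a s₁ :=
  subset_sdiff.2 ⟨sdiff_subset, disjoint_cheeseSet_ball _ le_rfl⟩

lemma disjoint_cheeseSet_ofAnnulus_ball (i : ι) :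
    Disjoint (ofAnnulus a hs₀ hs₁ c hρ).cheeseSet (ball (c i) (ρ i)) := by
  have h := disjoint_cheeseSet_ball (ofAnnulus a hs₀ hs₁ c hρ) (Nat.le_add_left 1 (encode i + 1))
  rwa [ofAnnulus_a_encode, ofAnnulus_r_encode] at h

lemma isClassical_ofAnnulus (hs : s₁ < s₀) (hsum : Summable ρ)
    (hsub : ∀ i, closedBall (c i) (ρ i) ⊆ interior (closedBall a s₀ \ ball a s₁))
    (hdisj : Pairwise (Disjoint on fun i => closedBall (c i) (ρ i))) :
    (ofAnnulus a hs₀ hs₁ c hρ).IsClassical := by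
  have hs₀pos : 0 < s₀ := hs₁.trans_lt hs
  have hdisj_one (i : ι) (h1 : 0 < s₁) : Disjoint (closedBall a s₁) (closedBall (c i) (ρ i)) :=
    (disjoint_closedBall_interior_of_disjoint_ball h1.ne' disjoint_sdiff_right).mono_right (hsub i)
  refine ⟨(summable_nat_add_iff 1).1 (hasSum_r_ofAnnulus hsum.hasSum).summable, hs₀pos,
    fun k hk => ⟨?_, fun l hl hlk => disjoint_iff_inter_eq_empty.1 ?_⟩⟩
  · rcases eq_one_or_exists_encode_of_mem_sig_ofAnnulus hk with rfl | ⟨i, rfl⟩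
    · exact closedBall_subset_ball hs
    · rw [ofAnnulus_a_encode, ofAnnulus_r_encode]
      exact (hsub i).trans
        ((interior_mono sdiff_subset).trans_eq (interior_closedBall a hs₀pos.ne'))
  · rcases eq_one_or_exists_encode_of_mem_sig_ofAnnulus hk with rfl | ⟨i, rfl⟩ <;>
      rcases eq_one_or_exists_encode_of_mem_sig_ofAnnulus hl with rfl | ⟨j, rfl⟩
    · exact absurd rfl hlk
    · rw [ofAnnulus_a_encode, ofAnnulus_r_encode]
      exact hdisj_one j hk.2
    · rw [ofAnnulus_a_encode, ofAnnulus_r_encode]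
      exact (hdisj_one i hl.2).symm
    · simp only [ofAnnulus_a_encode, ofAnnulus_r_encode]
      exact hdisj fun hij => hlk (by rw [hij])

end SwissCheese

/-- for every `ε > 0` and `s₀ > s₁ ≥ 0` there is a classical abstract Swiss
cheese `A` with `a₀ = a₁`, `r₀ = s₀`, `r₁ = s₁` and `ρ_ann(A) = ∑_{n ≥ 2} r_n < ε`, such
that `R(X_A)` has no non-zero bounded point derivation at any point of `X_A`. -/
theorem stmt_5 (ε : ℝ) (hε : 0 < ε) (s₀ s₁ : ℝ) (hs₁ : 0 ≤ s₁) (hs : s₁ < s₀) :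
    ∃ A : SwissCheese, A.IsClassical ∧ A.a 0 = A.a 1 ∧ A.r 0 = s₀ ∧ A.r 1 = s₁ ∧
      A.annRadSum < ε ∧
      ∀ (x : A.cheeseSet) (d : Rx A.cheeseSet →L[ℂ] ℂ), IsBPD A.cheeseSet x d → d = 0 := by
  have hs₀ : 0 < s₀ := hs₁.trans_lt hs
  obtain ⟨X, C, r, hX₀, hX, ⟨S, hSε, hS⟩, hsum⟩ :=
    (isCorkscrew_closedBall_sdiff_ball 0 hs₁ hs).exists_isPerforationSeq_hasSum_lt
      (isBounded_closedBall.subset sdiff_subset) hε (fun n => n)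
  let _ := Encodable.ofCountable (Σ n, C n)
  let A := SwissCheese.ofAnnulus 0 hs₀.le hs₁ (fun i : Σ n, C n => (i.2 : ℂ))
    fun i => (hX.isPerforation i.1).radius_pos.le
  have hAX : ∀ n, A.cheeseSet ⊆ X n := hX.subset_of_forall_disjoint
    (hX₀ ▸ SwissCheese.cheeseSet_ofAnnulus_subset) SwissCheese.disjoint_cheeseSet_ofAnnulus_ball
  have hcentre {n : ℕ} {c : ℂ} (hc : c ∈ C n) : c ∉ A.cheeseSet := fun hcA =>
    disjoint_left.1 (SwissCheese.disjoint_cheeseSet_ofAnnulus_ball ⟨n, c, hc⟩) hcA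
      (mem_ball_self (hX.isPerforation n).radius_pos)
  refine ⟨A, SwissCheese.isClassical_ofAnnulus hs hS.summable (hX₀ ▸ hX.closedBall_subset)
    hX.pairwise_disjoint_closedBall, rfl, rfl, rfl,
    (SwissCheese.hasSum_r_ofAnnulus hS).tsum_eq.trans_lt hSε,
    fun x d hd => hd.eq_zero_of_forall_exists_le_sum (B := 2) fun M => ?_⟩
  obtain ⟨n, hn⟩ := exists_nat_ge M
  exact ⟨C n, fun _ => r n, fun c hc => ⟨hcentre hc, (hX.isPerforation n).radius_pos.le⟩,
    fun z hz => (hsum n z (hAX _ hz)).1, hn.trans (hsum n x (hAX _ x.2)).2⟩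
end

section
/- Let A = ((a_n, r_n)) be a classical abstract Swiss cheese and suppose that ∑_{n ∈ S_A} r_n log(1/r_n) < ∞. Then for Lebesgue-almost every point z of X_A there exists a non-zero bounded point derivation on R(X_A) at z. -/
open Metric Set

open Metric Set

/-!
For almost every `z ∈ X_A` the sum `∑ rₙ / (|z - aₙ| - rₙ)²` converges: by Borel-Cantelli `z` lies
in only finitely many of the doubled disks `ball aₙ (2 rₙ)`, and outside of them the `n`-th term
is at most `4 rₙ / |z - aₙ|²`, whose integral over an annulus `2 rₙ ≤ |z - aₙ| < R` is of order
`rₙ log (1 / rₙ) + rₙ`. For such `z`, a rational function `f` with poles off `X_A` satisfies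
Cauchy's formula
`2πi f'(z) = ∮_{|w - a₀| = r₀} f(w) / (w - z)² dw - ∑ₙ ∮_{|w - aₙ| = rₙ} f(w) / (w - z)² dw`.
The right-hand side is a bounded functional on `C(X_A)`, so `f ↦ f'(z)` extends to `R(X_A)`, where
the Leibniz rule survives by density.
-/

section AlmostEverywhereSummability

open MeasureTheory Module
open scoped ENNReal

lemma eqOn_pow_smul_indicator_Ico_inv_sq (s R : ℝ) :
    EqOn (fun t ↦ t ^ (finrank ℝ ℂ - 1) • (Ico s R).indicator (fun t ↦ (t ^ 2)⁻¹) t)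
      ((Ico s R).indicator fun t ↦ t⁻¹) (Ioi 0) := by
  intro t ht
  have ht : t ≠ 0 := ne_of_gt ht
  by_cases h : t ∈ Ico s R <;> simp [h, pow_two, ht]

lemma integrable_indicator_Ico_inv_sq_norm {s : ℝ} (hs : 0 < s) (R : ℝ) :
    Integrable fun z : ℂ ↦ (Ico s R).indicator (fun t ↦ (t ^ 2)⁻¹) ‖z‖ := by
  have integrable_inv : IntegrableOn (fun t : ℝ ↦ t⁻¹) (Ico s R) :=
    ((continuousOn_inv₀.mono fun t ht ↦ (hs.trans_le ht.1).ne').integrableOn_Icc).mono_set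
      Ico_subset_Icc_self
  rw [integrable_fun_norm_addHaar volume,
    integrableOn_congr_fun (eqOn_pow_smul_indicator_Ico_inv_sq s R) measurableSet_Ioi]
  exact (integrable_inv.integrable_indicator measurableSet_Ico).integrableOn

lemma integral_indicator_Ico_inv_sq_norm {s R : ℝ} (hs : 0 < s) (hsR : s ≤ R) :
    ∫ z : ℂ, (Ico s R).indicator (fun t ↦ (t ^ 2)⁻¹) ‖z‖ = 2 * Real.pi * Real.log (R / s) := by
  rw [integral_fun_norm_addHaar volume ((Ico s R).indicator fun t ↦ (t ^ 2)⁻¹),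
    setIntegral_congr_fun measurableSet_Ioi (eqOn_pow_smul_indicator_Ico_inv_sq s R),
    setIntegral_indicator measurableSet_Ico,
    inter_eq_right.mpr (Ico_subset_Ici_self.trans (Ici_subset_Ioi.mpr hs)),
    integral_Ico_eq_integral_Ioc, ← intervalIntegral.integral_of_le hsR,
    integral_inv_of_pos hs (hs.trans_le hsR)]
  simp [measureReal_def, Complex.volume_ball, mul_assoc]

lemma lintegral_annulus_inv_norm_sq (a : ℂ) {s R : ℝ} (hs : 0 < s) (hR : 0 < R) :
    ∫⁻ z in ball a R \ ball a s, ENNReal.ofReal (‖z - a‖ ^ 2)⁻¹ =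
      ENNReal.ofReal (2 * Real.pi * Real.log (R / s)) := by
  rcases le_total R s with hRs | hsR
  · have hlog : Real.log (R / s) ≤ 0 :=
      Real.log_nonpos (by positivity) ((div_le_one hs).mpr hRs)
    rw [sdiff_eq_bot_iff.mpr (ball_subset_ball hRs), ENNReal.ofReal_of_nonpos]
    · exact setLIntegral_empty _
    · exact mul_nonpos_of_nonneg_of_nonpos (by positivity) hlog
  let radial : ℝ → ℝ := (Ico s R).indicator fun t ↦ (t ^ 2)⁻¹
  have mem_annulus_iff (z : ℂ) : z ∈ ball a R \ ball a s ↔ ‖z - a‖ ∈ Ico s R := by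
    simp [dist_eq_norm, and_comm]
  calc ∫⁻ z in ball a R \ ball a s, ENNReal.ofReal (‖z - a‖ ^ 2)⁻¹
      = ∫⁻ z, ENNReal.ofReal (radial ‖z - a‖) := by
        rw [← lintegral_indicator (measurableSet_ball.diff measurableSet_ball)]
        refine lintegral_congr fun z ↦ ?_
        by_cases h : ‖z - a‖ ∈ Ico s R <;> simp [indicator, radial, mem_annulus_iff, h]
    _ = ∫⁻ z : ℂ, ENNReal.ofReal (radial ‖z‖) :=
        lintegral_sub_right_eq_self (fun z ↦ ENNReal.ofReal (radial ‖z‖)) a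
    _ = ENNReal.ofReal (∫ z : ℂ, radial ‖z‖) :=
        (ofReal_integral_eq_lintegral_ofReal (integrable_indicator_Ico_inv_sq_norm hs R) <|
          .of_forall fun z ↦ indicator_nonneg (fun t _ ↦ by positivity) _).symm
    _ = ENNReal.ofReal (2 * Real.pi * Real.log (R / s)) := by
        rw [integral_indicator_Ico_inv_sq_norm hs hsR]

lemma ae_finite_setOf_mem_ball {ι E : Type*} [Countable ι] [NormedAddCommGroup E] [NormedSpace ℝ E]
    [Nontrivial E] [FiniteDimensional ℝ E] [MeasurableSpace E] [BorelSpace E] (μ : Measure E)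
    [μ.IsAddHaarMeasure] (a : ι → E) {r : ι → ℝ} (hr : ∀ i, 0 ≤ r i)
    (hsum : Summable fun i ↦ r i ^ finrank ℝ E) :
    ∀ᵐ z ∂μ, {i | z ∈ ball (a i) (r i)}.Finite := by
  apply ae_finite_setOfPred_mem
  simp_rw [Measure.addHaar_ball μ _ (hr _), ENNReal.tsum_mul_right]
  exact ENNReal.mul_ne_top hsum.tsum_ofReal_ne_top measure_ball_lt_top.ne

lemma ae_summable_toReal_of_tsum_lintegral_ne_top {ι α : Type*} [Countable ι]
    [MeasurableSpace α] {μ : Measure α} {f : ι → α → ℝ≥0∞} (hf : ∀ i, AEMeasurable (f i) μ)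
    (hsum : ∑' i, ∫⁻ x, f i x ∂μ ≠ ∞) : ∀ᵐ x ∂μ, Summable fun i ↦ (f i x).toReal := by
  rw [← lintegral_tsum hf] at hsum
  filter_upwards [ae_lt_top' (AEMeasurable.tsum hf) hsum] with x hx
  exact ENNReal.summable_toReal hx.ne

lemma div_sub_sq_le_four_mul_div_sq {r d : ℝ} (hr : 0 ≤ r) (hd : 2 * r ≤ d) :
    r / (d - r) ^ 2 ≤ 4 * (r * (d ^ 2)⁻¹) := by
  rcases hr.eq_or_lt with rfl | hr
  · simp
  have hdr : 0 < d - r := by linarith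
  have hd0 : 0 < d := by linarith
  have hhalf : d ^ 2 ≤ 4 * (d - r) ^ 2 := by nlinarith
  rw [← div_eq_mul_inv, ← mul_div_assoc, div_le_div_iff₀ (by positivity) (by positivity)]
  nlinarith

variable {ι : Type*} [Countable ι]

lemma ae_summable_mul_indicator_annulus (a : ι → ℂ) {r : ι → ℝ} (hr : ∀ i, 0 < r i)
    (hsum : Summable r) (hlog : Summable fun i ↦ r i * Real.log (1 / r i))
    {R : ℝ} (hR : 0 < R) :
    ∀ᵐ z : ℂ, Summable fun i ↦
      r i * (ball (a i) R \ ball (a i) (2 * r i)).indicator (fun w ↦ (‖w - a i‖ ^ 2)⁻¹) z := by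
  let f (i : ι) (z : ℂ) : ℝ≥0∞ := ENNReal.ofReal (r i) *
    (ball (a i) R \ ball (a i) (2 * r i)).indicator
      (fun w ↦ ENNReal.ofReal (‖w - a i‖ ^ 2)⁻¹) z
  have annulus_meas (i : ι) : MeasurableSet (ball (a i) R \ ball (a i) (2 * r i)) :=
    measurableSet_ball.diff measurableSet_ball
  have f_meas (i : ι) : Measurable (f i) :=
    (Measurable.indicator (by fun_prop) (annulus_meas i)).const_mul _
  have lintegral_f (i : ι) : ∫⁻ z, f i z = ENNReal.ofReal
      (2 * Real.pi * (Real.log (R / 2) * r i + r i * Real.log (1 / r i))) := by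
    have hri := hr i
    rw [lintegral_const_mul' _ _ ENNReal.ofReal_ne_top, lintegral_indicator (annulus_meas i),
      lintegral_annulus_inv_norm_sq _ (by positivity) hR, ← ENNReal.ofReal_mul hri.le,
      show R / (2 * r i) = R / 2 * (1 / r i) by field_simp,
      Real.log_mul (by positivity) (by positivity)]
    ring_nf
  have tsum_lintegral_f : ∑' i, ∫⁻ z, f i z ≠ ∞ := by
    simp_rw [lintegral_f]
    exact (((hsum.mul_left _).add hlog).mul_left _).tsum_ofReal_ne_top
  filter_upwards [ae_summable_toReal_of_tsum_lintegral_ne_top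
    (fun i ↦ (f_meas i).aemeasurable) tsum_lintegral_f] with z hz
  refine hz.congr fun i ↦ ?_
  by_cases h : z ∈ ball (a i) R \ ball (a i) (2 * r i) <;> simp [f, h, (hr i).le]

theorem ae_summable_div_norm_sub_sub_sq (a : ι → ℂ) {r : ι → ℝ} (hr : ∀ i, 0 < r i)
    (hsum : Summable r) (hlog : Summable fun i ↦ r i * Real.log (1 / r i))
    {R : ℝ} (hR : 0 < R) :
    ∀ᵐ z : ℂ, (∀ i, dist z (a i) < R) → Summable fun i ↦ r i / (‖z - a i‖ - r i) ^ 2 := by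
  have summable_sq : Summable fun i ↦ (2 * r i) ^ finrank ℝ ℂ := by
    have hdiag : Summable fun i ↦ r i * r i :=
      (hsum.mul_of_nonneg hsum (fun i ↦ (hr i).le) fun i ↦ (hr i).le).comp_injective
        (i := fun i ↦ (i, i)) fun _ _ h ↦ congrArg Prod.fst h
    refine (hdiag.mul_left 4).congr fun i ↦ ?_
    rw [Complex.finrank_real_complex]
    ring
  filter_upwards [ae_finite_setOf_mem_ball volume a (fun i ↦ by linarith [hr i]) summable_sq,
    ae_summable_mul_indicator_annulus a hr hsum hlog hR] with z hfin hann hz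
  refine (hann.mul_left 4).of_norm_bounded_eventually ?_
  filter_upwards [hfin.compl_mem_cofinite] with i hi
  have hmem : z ∈ ball (a i) R \ ball (a i) (2 * r i) := ⟨hz i, hi⟩
  have hfar : 2 * r i ≤ ‖z - a i‖ := by simpa [dist_eq_norm] using hi
  rw [indicator_of_mem hmem, Real.norm_of_nonneg (div_nonneg (hr i).le (sq_nonneg _))]
  exact div_sub_sq_le_four_mul_div_sq (hr i).le hfar

end AlmostEverywhereSummability

section PartialFractions

/-- The functions on `K` that are linear combinations of integer powers `(w - b) ^ k` with `b`
outside `K`. By partial fractions these are the rational functions with poles off `K`, as soon as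
`K` is not the whole of an algebraically closed field. -/
def polarSpan {𝕜 : Type*} [Field 𝕜] (K : Set 𝕜) : Submodule 𝕜 (K → 𝕜) :=
  Submodule.span 𝕜 {f | ∃ b ∉ K, ∃ k : ℤ, f = fun w : K ↦ ((w : 𝕜) - b) ^ k}

variable {𝕜 : Type*} [Field 𝕜] {K : Set 𝕜} {b x : 𝕜}

lemma sub_zpow_mem_polarSpan (hb : b ∉ K) (k : ℤ) :
    (fun w : K ↦ ((w : 𝕜) - b) ^ k) ∈ polarSpan K :=
  Submodule.subset_span ⟨b, hb, k, rfl⟩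

lemma sub_ne_zero_of_notMem (hb : b ∉ K) (w : K) : (w : 𝕜) - b ≠ 0 :=
  sub_ne_zero.mpr fun h ↦ hb (h ▸ w.2)

lemma inv_sub_mul_sub_zpow_mem_polarSpan (hx : x ∉ K) (hb : b ∉ K) (k : ℤ) :
    (fun w : K ↦ ((w : 𝕜) - x)⁻¹ * ((w : 𝕜) - b) ^ k) ∈ polarSpan K := by
  rcases eq_or_ne b x with rfl | hbx
  · convert sub_zpow_mem_polarSpan hb (k - 1) using 2 with w
    rw [zpow_sub_one₀ (sub_ne_zero_of_notMem hb w), mul_comm]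
  -- Since `w - b = (w - x) + (x - b)`, consecutive exponents are related by this recursion, which
  -- can be run in both directions.
  have recursion (j : ℤ) (w : K) : ((w : 𝕜) - x)⁻¹ * ((w : 𝕜) - b) ^ (j + 1) =
      ((w : 𝕜) - b) ^ j + (x - b) * (((w : 𝕜) - x)⁻¹ * ((w : 𝕜) - b) ^ j) := by
    have hwx := sub_ne_zero_of_notMem hx w
    rw [zpow_add_one₀ (sub_ne_zero_of_notMem hb w)]
    field_simp
    ring
  induction k with
  | zero => simpa using sub_zpow_mem_polarSpan hx (-1)
  | succ j ih =>
    simp_rw [recursion]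
    exact add_mem (sub_zpow_mem_polarSpan hb j) (Submodule.smul_mem _ (x - b) ih)
  | pred j ih =>
    have hxb : x - b ≠ 0 := sub_ne_zero.mpr hbx.symm
    convert Submodule.smul_mem _ (x - b)⁻¹
      (sub_mem ih (sub_zpow_mem_polarSpan hb (-(j : ℤ) - 1))) using 1
    funext w
    have step := recursion (-(j : ℤ) - 1) w
    rw [sub_add_cancel] at step
    simp only [Pi.smul_apply, Pi.sub_apply, smul_eq_mul, step]
    field_simp
    ring

lemma mul_mem_polarSpan_of_forall_zpow {g f : K → 𝕜}
    (hg : ∀ b ∉ K, ∀ k : ℤ, (fun w : K ↦ g w * ((w : 𝕜) - b) ^ k) ∈ polarSpan K)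
    (hf : f ∈ polarSpan K) : g * f ∈ polarSpan K := by
  have span_le : polarSpan K ≤ (polarSpan K).comap (LinearMap.mulLeft 𝕜 g) := by
    refine Submodule.span_le.mpr ?_
    rintro _ ⟨b, hb, k, rfl⟩
    exact hg b hb k
  exact span_le hf

lemma coe_mul_mem_polarSpan {f : K → 𝕜} (hf : f ∈ polarSpan K) :
    (fun w : K ↦ (w : 𝕜)) * f ∈ polarSpan K := by
  refine mul_mem_polarSpan_of_forall_zpow (fun b hb k ↦ ?_) hf
  convert add_mem (sub_zpow_mem_polarSpan hb (k + 1))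
    (Submodule.smul_mem _ b (sub_zpow_mem_polarSpan hb k)) using 1
  funext w
  simp only [Pi.add_apply, Pi.smul_apply, smul_eq_mul,
    zpow_add_one₀ (sub_ne_zero_of_notMem hb w)]
  ring

lemma eval_mul_mem_polarSpan (p : Polynomial 𝕜) {f : K → 𝕜} (hf : f ∈ polarSpan K) :
    (fun w : K ↦ p.eval (w : 𝕜)) * f ∈ polarSpan K := by
  induction p using Polynomial.induction_on' with
  | add p q hp hq =>
    convert add_mem hp hq using 1
    funext w
    simp [add_mul]
  | monomial n c =>
    induction n with
    | zero =>
      convert Submodule.smul_mem _ c hf using 1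
      funext w
      simp
    | succ n ih =>
      convert coe_mul_mem_polarSpan ih using 1
      funext w
      simp only [Pi.mul_apply, Polynomial.eval_monomial]
      ring

lemma prod_inv_sub_mem_polarSpan (hK : Kᶜ.Nonempty) (s : Multiset 𝕜) (hs : ∀ b ∈ s, b ∉ K) :
    (fun w : K ↦ (s.map fun b ↦ ((w : 𝕜) - b)⁻¹).prod) ∈ polarSpan K := by
  induction s using Multiset.induction with
  | empty => simpa using sub_zpow_mem_polarSpan hK.some_mem 0
  | cons x s ih =>
    rw [Multiset.forall_mem_cons] at hs
    simp_rw [Multiset.map_cons, Multiset.prod_cons]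
    exact mul_mem_polarSpan_of_forall_zpow
      (fun b hb k ↦ inv_sub_mul_sub_zpow_mem_polarSpan hs.1 hb k) (ih hs.2)

theorem div_mem_polarSpan [IsAlgClosed 𝕜] (hK : Kᶜ.Nonempty) (p : Polynomial 𝕜) {q : Polynomial 𝕜}
    (hq : ∀ w ∈ K, q.eval w ≠ 0) :
    (fun w : K ↦ p.eval (w : 𝕜) / q.eval (w : 𝕜)) ∈ polarSpan K := by
  rcases eq_or_ne q 0 with rfl | hq0
  · simp only [Polynomial.eval_zero, div_zero]
    exact (polarSpan K).zero_mem
  have roots_notMem (b : 𝕜) (hb : b ∈ q.roots) : b ∉ K := fun hbK ↦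
    hq b hbK ((Polynomial.mem_roots hq0).mp hb)
  convert Submodule.smul_mem _ q.leadingCoeff⁻¹
    (eval_mul_mem_polarSpan p (prod_inv_sub_mem_polarSpan hK q.roots roots_notMem)) using 1
  funext w
  simp only [Pi.smul_apply, Pi.mul_apply, smul_eq_mul,
    (IsAlgClosed.splits q).eval_eq_prod_roots (w : 𝕜), Multiset.prod_map_inv, div_eq_mul_inv,
    mul_inv]
  ring

end PartialFractions

section SecondOrderExpansion

open Polynomial

lemma X_sub_C_sq_dvd_of_isRoot_of_isRoot_derivative {S : Type*} [CommRing S] {p : S[X]} {t : S}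
    (hp : p.IsRoot t) (hp' : p.derivative.IsRoot t) : (X - C t) ^ 2 ∣ p := by
  obtain ⟨g, rfl⟩ := dvd_iff_isRoot.mpr hp
  have root_g : g.IsRoot t := by simpa using hp'
  rw [sq]
  exact mul_dvd_mul_left _ (dvd_iff_isRoot.mpr root_g)

lemma exists_div_eq_add_deriv_mul_add_sq_mul {𝕜 : Type*} [NontriviallyNormedField 𝕜] {z : 𝕜}
    (p : 𝕜[X]) {q : 𝕜[X]} (hqz : q.eval z ≠ 0) :
    ∃ s : 𝕜[X], ∀ w, q.eval w ≠ 0 → p.eval w / q.eval w =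
      p.eval z / q.eval z + deriv (fun w ↦ p.eval w / q.eval w) z * (w - z) +
        (w - z) ^ 2 * (s.eval w / q.eval w) := by
  rw [((p.hasDerivAt z).fun_div (q.hasDerivAt z) hqz).deriv]
  set f₀ := p.eval z / q.eval z with hf₀
  set f₁ := (p.derivative.eval z * q.eval z - p.eval z * q.derivative.eval z) / q.eval z ^ 2
    with hf₁
  set remainder : 𝕜[X] := p - (C f₀ + C f₁ * (X - C z)) * q with hremainder
  have root : remainder.IsRoot z := by simp [hremainder, hf₀, hqz]
  have root_derivative : remainder.derivative.IsRoot z := by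
    simp only [hremainder, hf₀, hf₁, IsRoot, derivative_sub, derivative_mul, derivative_add,
      derivative_C, derivative_X, eval_sub, eval_mul, eval_add, eval_C, eval_X, eval_zero, eval_one]
    field_simp
    ring
  obtain ⟨s, hs⟩ := X_sub_C_sq_dvd_of_isRoot_of_isRoot_derivative root root_derivative
  refine ⟨s, fun w hw ↦ ?_⟩
  have eval_remainder : p.eval w - (f₀ + f₁ * (w - z)) * q.eval w = (w - z) ^ 2 * s.eval w := by
    simpa [hremainder] using congrArg (eval w) hs
  rw [← mul_div_assoc, ← eval_remainder, sub_div, mul_div_cancel_right₀ _ hw]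
  ring

end SecondOrderExpansion

section BoundaryIntegral

open Complex

/-- The closed disk `closedBall c R` with the open disks `ball (a i) (r i)` removed. -/
def perforatedDisk {ι : Type*} (c : ℂ) (R : ℝ) (a : ι → ℂ) (r : ι → ℝ) : Set ℂ :=
  closedBall c R \ ⋃ i, ball (a i) (r i)

/-- The disks `ball (a i) (r i)` are nondegenerate, pairwise disjoint and contained in the
nondegenerate disk `ball c R`. Their closures may touch each other and the circle `sphere c R`. -/
structure IsDiskPacking {ι : Type*} (c : ℂ) (R : ℝ) (a : ι → ℂ) (r : ι → ℝ) : Prop where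
  outer_pos : 0 < R
  radius_pos : ∀ i, 0 < r i
  ball_subset : ∀ i, ball (a i) (r i) ⊆ ball c R
  disjoint : ∀ i j, i ≠ j → Disjoint (ball (a i) (r i)) (ball (a j) (r j))

/-- The circles bounding `perforatedDisk c R a r`. -/
def boundaryCircles {ι : Type*} (c : ℂ) (R : ℝ) (a : ι → ℂ) (r : ι → ℝ) : Set ℂ :=
  sphere c R ∪ ⋃ i, sphere (a i) (r i)

/-- The integral over the positively oriented boundary of `perforatedDisk c R a r`: the outer
circle counterclockwise and the inner circles clockwise. -/
noncomputable def boundaryIntegral {ι : Type*} [Fintype ι] (c : ℂ) (R : ℝ) (a : ι → ℂ)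
    (r : ι → ℝ) (f : ℂ → ℂ) : ℂ :=
  (∮ w in C(c, R), f w) - ∑ i, ∮ w in C(a i, r i), f w

lemma circleIntegral_sub_inv_eq_zero_of_notMem_closedBall {c b : ℂ} {R : ℝ} (hR : 0 ≤ R)
    (hb : b ∉ closedBall c R) : (∮ w in C(c, R), (w - b)⁻¹) = 0 := by
  have sub_ne (w : ℂ) (hw : w ∈ closedBall c R) : w - b ≠ 0 :=
    sub_ne_zero.mpr fun h ↦ hb (h ▸ hw)
  refine circleIntegral_eq_zero_of_differentiable_on_off_countable hR countable_empty
    (ContinuousOn.inv₀ (by fun_prop) sub_ne) fun w hw ↦ ?_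
  exact DifferentiableAt.inv (by fun_prop) (sub_ne w (ball_subset_closedBall hw.1))

variable {ι : Type*} {c : ℂ} {R : ℝ} {a : ι → ℂ} {r : ι → ℝ} {b z : ℂ}

lemma isCompact_perforatedDisk : IsCompact (perforatedDisk c R a r) :=
  (isCompact_closedBall c R).diff (isOpen_iUnion fun _ ↦ isOpen_ball)

lemma mem_perforatedDisk_of_mem_ball (hz : z ∈ ball c R)
    (hzi : ∀ i, z ∉ closedBall (a i) (r i)) :
    z ∈ perforatedDisk c R a r :=
  ⟨ball_subset_closedBall hz, by simpa using fun i h ↦ hzi i (ball_subset_closedBall h)⟩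

lemma sphere_subset_boundaryCircles (i : ι) : sphere (a i) (r i) ⊆ boundaryCircles c R a r :=
  subset_union_of_subset_right (subset_iUnion (fun i ↦ sphere (a i) (r i)) i) _

lemma notMem_boundaryCircles (hz : z ∈ ball c R) (hzi : ∀ i, z ∉ closedBall (a i) (r i)) :
    z ∉ boundaryCircles c R a r := by
  rintro (hmem | hmem)
  · exact sphere_disjoint_ball.notMem_of_mem_left hmem hz
  · obtain ⟨i, hi⟩ := mem_iUnion.mp hmem
    exact hzi i (sphere_subset_closedBall hi)

lemma boundaryIntegral_const_mul [Fintype ι] (x : ℂ) (f : ℂ → ℂ) :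
    boundaryIntegral c R a r (fun w ↦ x * f w) = x * boundaryIntegral c R a r f := by
  simp only [boundaryIntegral, circleIntegral.integral_const_mul, Finset.mul_sum, mul_sub]

lemma boundaryIntegral_sub_zpow_of_ne [Fintype ι] {k : ℤ} (hk : k ≠ -1) (b : ℂ) :
    boundaryIntegral c R a r (fun w ↦ (w - b) ^ k) = 0 := by
  simp [boundaryIntegral, circleIntegral.integral_sub_zpow_of_ne hk]

namespace IsDiskPacking

lemma comp_injective (hP : IsDiskPacking c R a r) {κ : Type*} {e : κ → ι}
    (he : Function.Injective e) : IsDiskPacking c R (a ∘ e) (r ∘ e) where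
  outer_pos := hP.outer_pos
  radius_pos k := hP.radius_pos (e k)
  ball_subset k := hP.ball_subset (e k)
  disjoint k l hkl := hP.disjoint (e k) (e l) (he.ne hkl)

lemma closedBall_subset (hP : IsDiskPacking c R a r) (i : ι) :
    closedBall (a i) (r i) ⊆ closedBall c R := by
  rw [← closure_ball _ (hP.radius_pos i).ne']
  exact closure_minimal ((hP.ball_subset i).trans ball_subset_closedBall) isClosed_closedBall

lemma disjoint_closedBall_ball (hP : IsDiskPacking c R a r) {i j : ι} (hij : i ≠ j) :
    Disjoint (closedBall (a i) (r i)) (ball (a j) (r j)) := by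
  rw [← closure_ball _ (hP.radius_pos i).ne']
  exact (hP.disjoint i j hij).closure_left isOpen_ball

lemma sphere_outer_subset (hP : IsDiskPacking c R a r) :
    sphere c R ⊆ perforatedDisk c R a r := by
  refine fun w hw ↦ ⟨sphere_subset_closedBall hw, fun hmem ↦ ?_⟩
  obtain ⟨i, hi⟩ := mem_iUnion.mp hmem
  exact sphere_disjoint_ball.notMem_of_mem_left hw (hP.ball_subset i hi)

lemma sphere_subset (hP : IsDiskPacking c R a r) (i : ι) :
    sphere (a i) (r i) ⊆ perforatedDisk c R a r := by
  refine fun w hw ↦ ⟨hP.closedBall_subset i (sphere_subset_closedBall hw), fun hmem ↦ ?_⟩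
  obtain ⟨j, hj⟩ := mem_iUnion.mp hmem
  rcases eq_or_ne i j with rfl | hij
  · exact sphere_disjoint_ball.notMem_of_mem_left hw hj
  · exact (hP.disjoint_closedBall_ball hij).notMem_of_mem_left (sphere_subset_closedBall hw) hj

lemma boundaryCircles_subset (hP : IsDiskPacking c R a r) :
    boundaryCircles c R a r ⊆ perforatedDisk c R a r :=
  union_subset hP.sphere_outer_subset (iUnion_subset hP.sphere_subset)

lemma circleIntegrable_outer (hP : IsDiskPacking c R a r) {f : ℂ → ℂ}
    (hf : ContinuousOn f (boundaryCircles c R a r)) : CircleIntegrable f c R :=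
  (hf.mono subset_union_left).circleIntegrable hP.outer_pos.le

lemma circleIntegrable (hP : IsDiskPacking c R a r) {f : ℂ → ℂ}
    (hf : ContinuousOn f (boundaryCircles c R a r)) (i : ι) : CircleIntegrable f (a i) (r i) :=
  (hf.mono (sphere_subset_boundaryCircles i)).circleIntegrable (hP.radius_pos i).le

variable [Fintype ι]

lemma boundaryIntegral_congr (hP : IsDiskPacking c R a r) {f g : ℂ → ℂ}
    (hfg : EqOn f g (boundaryCircles c R a r)) :
    boundaryIntegral c R a r f = boundaryIntegral c R a r g := by
  unfold boundaryIntegral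
  congr 1
  · exact circleIntegral.integral_congr hP.outer_pos.le (hfg.mono subset_union_left)
  · exact Finset.sum_congr rfl fun i _ ↦ circleIntegral.integral_congr (hP.radius_pos i).le
      (hfg.mono (sphere_subset_boundaryCircles i))

lemma boundaryIntegral_add (hP : IsDiskPacking c R a r) {f g : ℂ → ℂ}
    (hf : ContinuousOn f (boundaryCircles c R a r))
    (hg : ContinuousOn g (boundaryCircles c R a r)) :
    boundaryIntegral c R a r (fun w ↦ f w + g w) =
      boundaryIntegral c R a r f + boundaryIntegral c R a r g := by
  unfold boundaryIntegral
  rw [circleIntegral.integral_add (hP.circleIntegrable_outer hf) (hP.circleIntegrable_outer hg),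
    Finset.sum_congr rfl fun i _ ↦
      circleIntegral.integral_add (hP.circleIntegrable hf i) (hP.circleIntegrable hg i),
    Finset.sum_add_distrib]
  ring

lemma boundaryIntegral_sub_inv_of_mem (hP : IsDiskPacking c R a r) (hz : z ∈ ball c R)
    (hzi : ∀ i, z ∉ closedBall (a i) (r i)) :
    boundaryIntegral c R a r (fun w ↦ (w - z)⁻¹) = 2 * Real.pi * I := by
  rw [boundaryIntegral, circleIntegral.integral_sub_inv_of_mem_ball hz, Finset.sum_eq_zero,
    sub_zero]
  exact fun i _ ↦
    circleIntegral_sub_inv_eq_zero_of_notMem_closedBall (hP.radius_pos i).le (hzi i)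

lemma boundaryIntegral_sub_inv_of_notMem (hP : IsDiskPacking c R a r)
    (hb : b ∉ perforatedDisk c R a r) :
    boundaryIntegral c R a r (fun w ↦ (w - b)⁻¹) = 0 := by
  rw [boundaryIntegral, sub_eq_zero]
  by_cases hbR : b ∈ closedBall c R
  · obtain ⟨i, hi⟩ : ∃ i, b ∈ ball (a i) (r i) := by
      simpa [perforatedDisk, hbR] using hb
    rw [circleIntegral.integral_sub_inv_of_mem_ball (hP.ball_subset i hi),
      Fintype.sum_eq_single i, circleIntegral.integral_sub_inv_of_mem_ball hi]
    exact fun j hji ↦ circleIntegral_sub_inv_eq_zero_of_notMem_closedBall (hP.radius_pos j).le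
      ((hP.disjoint_closedBall_ball hji).notMem_of_mem_right hi)
  · rw [circleIntegral_sub_inv_eq_zero_of_notMem_closedBall hP.outer_pos.le hbR,
      Finset.sum_eq_zero]
    exact fun i _ ↦ circleIntegral_sub_inv_eq_zero_of_notMem_closedBall (hP.radius_pos i).le
      fun hi ↦ hbR (hP.closedBall_subset i hi)

lemma boundaryIntegral_sub_zpow (hP : IsDiskPacking c R a r)
    (hb : b ∉ perforatedDisk c R a r) (k : ℤ) :
    boundaryIntegral c R a r (fun w ↦ (w - b) ^ k) = 0 := by
  rcases eq_or_ne k (-1) with rfl | hk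
  · simpa only [zpow_neg_one] using hP.boundaryIntegral_sub_inv_of_notMem hb
  · exact boundaryIntegral_sub_zpow_of_ne hk b

lemma exists_continuousOn_boundaryIntegral_eq_zero (hP : IsDiskPacking c R a r)
    {h : perforatedDisk c R a r → ℂ} (hh : h ∈ polarSpan (perforatedDisk c R a r)) :
    ∃ g : ℂ → ℂ, (∀ w : perforatedDisk c R a r, g w = h w) ∧
      ContinuousOn g (boundaryCircles c R a r) ∧ boundaryIntegral c R a r g = 0 := by
  induction hh using Submodule.span_induction with
  | mem h hh =>
    obtain ⟨b, hb, k, rfl⟩ := hh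
    refine ⟨fun w ↦ (w - b) ^ k, fun w ↦ rfl, ?_, hP.boundaryIntegral_sub_zpow hb k⟩
    exact ContinuousOn.zpow₀ (by fun_prop) k fun w hw ↦
      .inl (sub_ne_zero.mpr fun hwb ↦ hb (hwb ▸ hP.boundaryCircles_subset hw))
  | zero =>
    refine ⟨fun _ ↦ 0, fun _ ↦ rfl, continuousOn_const, ?_⟩
    simpa only [zero_mul] using boundaryIntegral_const_mul 0 fun _ ↦ 0
  | add h₁ h₂ _ _ ih₁ ih₂ =>
    obtain ⟨g₁, hgh₁, hg₁, hint₁⟩ := ih₁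
    obtain ⟨g₂, hgh₂, hg₂, hint₂⟩ := ih₂
    refine ⟨fun w ↦ g₁ w + g₂ w, fun w ↦ by simp [hgh₁, hgh₂], hg₁.add hg₂, ?_⟩
    rw [hP.boundaryIntegral_add hg₁ hg₂, hint₁, hint₂, add_zero]
  | smul x h _ ih =>
    obtain ⟨g, hgh, hg, hint⟩ := ih
    refine ⟨fun w ↦ x * g w, fun w ↦ by simp [hgh], continuousOn_const.mul hg, ?_⟩
    rw [boundaryIntegral_const_mul, hint, mul_zero]

theorem boundaryIntegral_div_eq_zero (hP : IsDiskPacking c R a r) (p : Polynomial ℂ)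
    {q : Polynomial ℂ} (hq : ∀ w ∈ perforatedDisk c R a r, q.eval w ≠ 0) :
    boundaryIntegral c R a r (fun w ↦ p.eval w / q.eval w) = 0 := by
  have compl_nonempty : (perforatedDisk c R a r)ᶜ.Nonempty :=
    nonempty_compl.mpr isCompact_perforatedDisk.ne_univ
  obtain ⟨g, hg, -, hint⟩ :=
    hP.exists_continuousOn_boundaryIntegral_eq_zero (div_mem_polarSpan compl_nonempty p hq)
  rw [← hint]
  exact hP.boundaryIntegral_congr fun w hw ↦ (hg ⟨w, hP.boundaryCircles_subset hw⟩).symm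

theorem boundaryIntegral_inv_sub_sq_mul_div (hP : IsDiskPacking c R a r) (hz : z ∈ ball c R)
    (hzi : ∀ i, z ∉ closedBall (a i) (r i)) (p : Polynomial ℂ) {q : Polynomial ℂ}
    (hq : ∀ w ∈ perforatedDisk c R a r, q.eval w ≠ 0) :
    boundaryIntegral c R a r (fun w ↦ ((w - z) ^ 2)⁻¹ * (p.eval w / q.eval w)) =
      2 * Real.pi * I * deriv (fun w ↦ p.eval w / q.eval w) z := by
  have notMem_circles := notMem_boundaryCircles hz hzi
  have sub_ne (w : ℂ) (hw : w ∈ boundaryCircles c R a r) : w - z ≠ 0 :=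
    sub_ne_zero.mpr fun h ↦ notMem_circles (h ▸ hw)
  have hq_circles (w : ℂ) (hw : w ∈ boundaryCircles c R a r) : q.eval w ≠ 0 :=
    hq w (hP.boundaryCircles_subset hw)
  have z_mem : z ∈ perforatedDisk c R a r := mem_perforatedDisk_of_mem_ball hz hzi
  set f : ℂ → ℂ := fun w ↦ p.eval w / q.eval w with hf
  obtain ⟨s, hs⟩ := exists_div_eq_add_deriv_mul_add_sq_mul p (hq z z_mem)
  have expansion : EqOn (fun w ↦ ((w - z) ^ 2)⁻¹ * f w)
      (fun w ↦ f z * (w - z) ^ (-2 : ℤ) + deriv f z * (w - z)⁻¹ + s.eval w / q.eval w)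
      (boundaryCircles c R a r) := fun w hw ↦ by
    have := sub_ne w hw
    simp only [hf, hs w (hq_circles w hw), zpow_neg]
    field_simp
  have cont_inv_sq : ContinuousOn (fun w ↦ f z * (w - z) ^ (-2 : ℤ)) (boundaryCircles c R a r) :=
    continuousOn_const.mul (.zpow₀ (by fun_prop) _ fun w hw ↦ .inl (sub_ne w hw))
  have cont_inv : ContinuousOn (fun w ↦ deriv f z * (w - z)⁻¹) (boundaryCircles c R a r) :=
    continuousOn_const.mul (.inv₀ (by fun_prop) sub_ne)
  have cont_div : ContinuousOn (fun w ↦ s.eval w / q.eval w) (boundaryCircles c R a r) :=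
    s.continuous.continuousOn.div q.continuous.continuousOn hq_circles
  rw [hP.boundaryIntegral_congr expansion,
    hP.boundaryIntegral_add (cont_inv_sq.fun_add cont_inv) cont_div,
    hP.boundaryIntegral_add cont_inv_sq cont_inv, boundaryIntegral_const_mul,
    boundaryIntegral_const_mul, boundaryIntegral_sub_zpow_of_ne (by norm_num),
    hP.boundaryIntegral_sub_inv_of_mem hz hzi, hP.boundaryIntegral_div_eq_zero s hq]
  ring

end IsDiskPacking

end BoundaryIntegral

section CircleFunctional

lemma exists_clm_eq_intervalIntegral_mul_comp {K 𝕜 : Type*} [TopologicalSpace K] [CompactSpace K]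
    [RCLike 𝕜] {α β C : ℝ} {ρ : ℝ → 𝕜} (γ : C(ℝ, K)) (hρ : Continuous ρ) (hC : ∀ t, ‖ρ t‖ ≤ C) :
    ∃ T : C(K, 𝕜) →L[𝕜] 𝕜, (∀ f, T f = ∫ t in α..β, ρ t * f (γ t)) ∧ ‖T‖ ≤ C * |β - α| := by
  have C_nonneg : 0 ≤ C := (norm_nonneg _).trans (hC 0)
  let T : C(K, 𝕜) →ₗ[𝕜] 𝕜 :=
    { toFun f := ∫ t in α..β, ρ t * f (γ t)
      map_add' f g := by
        simp only [ContinuousMap.add_apply, mul_add]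
        exact intervalIntegral.integral_add (Continuous.intervalIntegrable (by fun_prop) _ _)
          (Continuous.intervalIntegrable (by fun_prop) _ _)
      map_smul' k f := by
        simp only [ContinuousMap.smul_apply, smul_eq_mul, mul_left_comm (ρ _) k,
          intervalIntegral.integral_const_mul, RingHom.id_apply] }
  have norm_T_le (f : C(K, 𝕜)) : ‖T f‖ ≤ C * |β - α| * ‖f‖ := by
    rw [mul_right_comm]
    refine intervalIntegral.norm_integral_le_of_norm_le_const fun t _ ↦ ?_
    rw [norm_mul]
    exact mul_le_mul (hC t) (f.norm_coe_le_norm _) (norm_nonneg _) C_nonneg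
  exact ⟨T.mkContinuous _ norm_T_le, fun f ↦ rfl,
    T.mkContinuous_norm_le (by positivity) norm_T_le⟩

variable {X : Set ℂ} [CompactSpace X] {a z : ℂ} {r : ℝ}

lemma exists_clm_eq_circleIntegral_mul {M : ℝ} {φ : ℂ → ℂ} (hr : 0 ≤ r) (hX : sphere a r ⊆ X)
    (hφ : ContinuousOn φ (sphere a r)) (hM : ∀ w ∈ sphere a r, ‖φ w‖ ≤ M) :
    ∃ T : C(X, ℂ) →L[ℂ] ℂ,
      (∀ (f : C(X, ℂ)) (g : ℂ → ℂ), (∀ x : X, f x = g x) → T f = ∮ w in C(a, r), φ w * g w) ∧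
      ‖T‖ ≤ 2 * Real.pi * (r * M) := by
  let γ : C(ℝ, X) := ⟨fun θ ↦ ⟨circleMap a r θ, hX (circleMap_mem_sphere a hr θ)⟩, by fun_prop⟩
  let ρ (θ : ℝ) : ℂ := deriv (circleMap a r) θ * φ (circleMap a r θ)
  have continuous_ρ : Continuous ρ := by
    simp only [ρ, deriv_circleMap]
    exact (by fun_prop : Continuous _).mul
      (hφ.comp_continuous (by fun_prop) (circleMap_mem_sphere a hr))
  have norm_ρ_le (θ : ℝ) : ‖ρ θ‖ ≤ r * M := by
    simp only [ρ, deriv_circleMap, norm_mul, norm_circleMap_zero, Complex.norm_I, mul_one,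
      abs_of_nonneg hr]
    exact mul_le_mul_of_nonneg_left (hM _ (circleMap_mem_sphere a hr θ)) hr
  obtain ⟨T, hT, norm_T_le⟩ := exists_clm_eq_intervalIntegral_mul_comp (α := 0)
    (β := 2 * Real.pi) γ continuous_ρ norm_ρ_le
  rw [sub_zero, abs_of_pos Real.two_pi_pos, mul_comm] at norm_T_le
  refine ⟨T, fun f g hfg ↦ ?_, norm_T_le⟩
  simp only [circleIntegral, smul_eq_mul, ← mul_assoc, hT]
  exact intervalIntegral.integral_congr fun θ _ ↦ congrArg (ρ θ * ·) (hfg (γ θ))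

lemma sq_norm_sub_sub_le_sq_norm_sub {w : ℂ} (hw : w ∈ sphere a r) :
    (‖z - a‖ - r) ^ 2 ≤ ‖w - z‖ ^ 2 := by
  rw [← mem_sphere_iff_norm.mp hw, norm_sub_rev w z, sq_le_sq, abs_norm]
  simpa only [sub_sub_sub_cancel_right] using abs_norm_sub_norm_le (z - a) (w - a)

lemma exists_clm_eq_circleIntegral_inv_sub_sq_mul (hr : 0 ≤ r) (hX : sphere a r ⊆ X)
    (hz : z ∉ sphere a r) :
    ∃ T : C(X, ℂ) →L[ℂ] ℂ,
      (∀ (f : C(X, ℂ)) (g : ℂ → ℂ), (∀ x : X, f x = g x) →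
        T f = ∮ w in C(a, r), ((w - z) ^ 2)⁻¹ * g w) ∧
      ‖T‖ ≤ 2 * Real.pi * (r / (‖z - a‖ - r) ^ 2) := by
  rw [mem_sphere_iff_norm, ← sub_eq_zero] at hz
  have dist_pos : 0 < (‖z - a‖ - r) ^ 2 := by positivity
  have norm_inv_le (w : ℂ) (hw : w ∈ sphere a r) :
      ‖((w - z) ^ 2)⁻¹‖ ≤ ((‖z - a‖ - r) ^ 2)⁻¹ := by
    rw [norm_inv, norm_pow]
    exact inv_anti₀ dist_pos (sq_norm_sub_sub_le_sq_norm_sub hw)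
  have cont : ContinuousOn (fun w ↦ ((w - z) ^ 2)⁻¹) (sphere a r) := by
    refine ContinuousOn.inv₀ (by fun_prop) fun w hw h ↦ ?_
    have := sq_norm_sub_sub_le_sq_norm_sub (z := z) hw
    rw [← norm_pow, h, norm_zero] at this
    exact dist_pos.not_ge this
  obtain ⟨T, hT, norm_T_le⟩ := exists_clm_eq_circleIntegral_mul hr hX cont norm_inv_le
  exact ⟨T, hT, norm_T_le⟩

end CircleFunctional

section PointDerivation

variable {X : Set ℂ}

lemma coe_adjoin_R0set : (Algebra.adjoin ℂ (R0set X) : Set C(X, ℂ)) = R0set X := by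
  refine Subset.antisymm (fun f hf ↦ ?_) Algebra.subset_adjoin
  induction hf using Algebra.adjoin_induction with
  | mem _ hf => exact hf
  | algebraMap k => exact ⟨Polynomial.C k, 1, by simp, by simp⟩
  | add f g _ _ hf hg =>
    obtain ⟨p, q, hq, hf⟩ := hf
    obtain ⟨p', q', hq', hg⟩ := hg
    exact ⟨p * q' + q * p', q * q', fun x ↦ by simpa using ⟨hq x, hq' x⟩,
      fun x ↦ by simp [hf, hg, div_add_div _ _ (hq x) (hq' x)]⟩
  | mul f g _ _ hf hg =>
    obtain ⟨p, q, hq, hf⟩ := hf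
    obtain ⟨p', q', hq', hg⟩ := hg
    exact ⟨p * p', q * q', fun x ↦ by simpa using ⟨hq x, hq' x⟩,
      fun x ↦ by simp [hf, hg, div_mul_div_comm]⟩

lemma coe_Rx [CompactSpace X] : (Rx X : Set C(X, ℂ)) = closure (R0set X) := by
  rw [Rx, Subalgebra.topologicalClosure_coe, coe_adjoin_R0set]

/-- `D` sends (the restriction of) every rational function with poles off `X` to its derivative
at `z`. -/
def IsDerivOnRational (D : C(X, ℂ) →L[ℂ] ℂ) (z : ℂ) : Prop :=
  ∀ (f : C(X, ℂ)) (p q : Polynomial ℂ), (∀ x : X, q.eval (x : ℂ) ≠ 0) →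
    (∀ x : X, f x = p.eval (x : ℂ) / q.eval (x : ℂ)) →
    D f = deriv (fun w ↦ p.eval w / q.eval w) z

namespace IsDerivOnRational

variable {D : C(X, ℂ) →L[ℂ] ℂ}

lemma leibniz_of_mem_R0set {z : X} (hD : IsDerivOnRational D z) {f g : C(X, ℂ)}
    (hf : f ∈ R0set X) (hg : g ∈ R0set X) : D (f * g) = f z * D g + D f * g z := by
  obtain ⟨p, q, hq, hf⟩ := hf
  obtain ⟨p', q', hq', hg⟩ := hg
  have diff_f : DifferentiableAt ℂ (fun w ↦ p.eval w / q.eval w) z :=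
    p.differentiableAt.div q.differentiableAt (hq z)
  have diff_g : DifferentiableAt ℂ (fun w ↦ p'.eval w / q'.eval w) z :=
    p'.differentiableAt.div q'.differentiableAt (hq' z)
  rw [hD f p q hq hf, hD g p' q' hq' hg, hD (f * g) (p * p') (q * q')
    (fun x ↦ by simpa using ⟨hq x, hq' x⟩) (fun x ↦ by simp [hf, hg, div_mul_div_comm]), hf, hg]
  simp only [Polynomial.eval_mul, mul_div_mul_comm]
  rw [deriv_fun_mul diff_f diff_g, add_comm]

variable [CompactSpace X]

lemma leibniz_of_mem_Rx {z : X} (hD : IsDerivOnRational D z) {f g : C(X, ℂ)}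
    (hf : f ∈ Rx X) (hg : g ∈ Rx X) : D (f * g) = f z * D g + D f * g z := by
  have leibniz : EqOn (fun x : C(X, ℂ) × C(X, ℂ) ↦ D (x.1 * x.2))
      (fun x ↦ x.1 z * D x.2 + D x.1 * x.2 z) (R0set X ×ˢ R0set X) :=
    fun x hx ↦ hD.leibniz_of_mem_R0set hx.1 hx.2
  refine leibniz.closure (by fun_prop) (by fun_prop) (?_ : (f, g) ∈ _)
  rw [closure_prod_eq, ← coe_Rx]
  exact ⟨hf, hg⟩

theorem exists_isBPD {z : X} (hD : IsDerivOnRational D z) :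
    ∃ d : Rx X →L[ℂ] ℂ, d ≠ 0 ∧ IsBPD X z d := by
  refine ⟨D.comp (Submodule.subtypeL (Subalgebra.toSubmodule (Rx X))), fun h ↦ ?_,
    fun f g ↦ hD.leibniz_of_mem_Rx f.2 g.2⟩
  let coord : C(X, ℂ) := ⟨Subtype.val, continuous_subtype_val⟩
  have coord_mem : coord ∈ Rx X :=
    subset_closure (Algebra.subset_adjoin ⟨Polynomial.X, 1, by simp, by simp [coord]⟩)
  have D_coord : D coord = 1 := by
    simpa using hD coord Polynomial.X 1 (by simp) (by simp [coord])
  exact one_ne_zero (D_coord.symm.trans (DFunLike.congr_fun h (⟨coord, coord_mem⟩ : Rx X)))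

end IsDerivOnRational

end PointDerivation

section SwissCheeseDerivations

open Complex MeasureTheory Filter Topology

variable {ι : Type*} {c z : ℂ} {R : ℝ} {a : ι → ℂ} {r : ι → ℝ}

instance : CompactSpace (perforatedDisk c R a r) :=
  isCompact_iff_compactSpace.mp isCompact_perforatedDisk

lemma exists_finset_perforatedDisk_subset {U : Set ℂ} (hU : IsOpen U)
    (h : perforatedDisk c R a r ⊆ U) :
    ∃ F₀ : Finset ι, ∀ F : Finset ι, F₀ ⊆ F →
      perforatedDisk c R (fun i : F ↦ a i) (fun i : F ↦ r i) ⊆ U := by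
  obtain ⟨F₀, hF₀⟩ := ((isCompact_closedBall c R).diff hU).elim_finite_subcover
    (fun i ↦ ball (a i) (r i)) (fun _ ↦ isOpen_ball) (sdiff_subset_comm.mp h)
  refine ⟨F₀, fun F hF ↦ sdiff_subset_comm.mp (hF₀.trans ?_)⟩
  exact iUnion₂_subset fun i hi ↦
    subset_iUnion (fun i : F ↦ ball (a i) (r i)) ⟨i, hF hi⟩

lemma ae_mem_ball_and_forall_notMem_closedBall [Countable ι] (c : ℂ) (R : ℝ) (a : ι → ℂ)
    (r : ι → ℝ) :
    ∀ᵐ z : ℂ, z ∈ perforatedDisk c R a r → z ∈ ball c R ∧ ∀ i, z ∉ closedBall (a i) (r i) := by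
  have notMem_outer : ∀ᵐ z : ℂ, z ∉ sphere c R :=
    measure_eq_zero_iff_ae_notMem.mp (Measure.addHaar_sphere volume c R)
  have notMem_inner : ∀ᵐ z : ℂ, ∀ i, z ∉ sphere (a i) (r i) := ae_all_iff.mpr fun i ↦
    measure_eq_zero_iff_ae_notMem.mp (Measure.addHaar_sphere volume (a i) (r i))
  filter_upwards [notMem_outer, notMem_inner] with z houter hinner ⟨hzR, hzi⟩
  simp only [← ball_union_sphere] at hzR ⊢
  exact ⟨hzR.resolve_right houter, fun i hi ↦
    hi.elim (fun hball ↦ hzi (mem_iUnion_of_mem i hball)) (hinner i)⟩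

namespace IsDiskPacking

lemma eventually_sub_sum_circleIntegral_eq_deriv (hP : IsDiskPacking c R a r) (hz : z ∈ ball c R)
    (hzi : ∀ i, z ∉ closedBall (a i) (r i)) (p : Polynomial ℂ) {q : Polynomial ℂ}
    (hq : ∀ w ∈ perforatedDisk c R a r, q.eval w ≠ 0) :
    ∀ᶠ F : Finset ι in atTop,
      (∮ w in C(c, R), ((w - z) ^ 2)⁻¹ * (p.eval w / q.eval w)) -
          ∑ i ∈ F, ∮ w in C(a i, r i), ((w - z) ^ 2)⁻¹ * (p.eval w / q.eval w) =
        2 * Real.pi * I * deriv (fun w ↦ p.eval w / q.eval w) z := by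
  obtain ⟨F₀, hF₀⟩ := exists_finset_perforatedDisk_subset (U := {w | q.eval w ≠ 0})
    (isOpen_ne_fun q.continuous continuous_const) hq
  filter_upwards [eventually_ge_atTop F₀] with F hF
  have hPF := hP.comp_injective (Subtype.val_injective (p := (· ∈ F)))
  rw [← hPF.boundaryIntegral_inv_sub_sq_mul_div hz (fun i ↦ hzi i) p (hF₀ F hF),
    boundaryIntegral, ← Finset.sum_coe_sort F]
  rfl

theorem exists_isDerivOnRational (hP : IsDiskPacking c R a r) (hz : z ∈ ball c R)
    (hzi : ∀ i, z ∉ closedBall (a i) (r i))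
    (hsum : Summable fun i ↦ r i / (‖z - a i‖ - r i) ^ 2) :
    ∃ D : C(perforatedDisk c R a r, ℂ) →L[ℂ] ℂ, IsDerivOnRational D z := by
  obtain ⟨T₀, hT₀, -⟩ := exists_clm_eq_circleIntegral_inv_sub_sq_mul hP.outer_pos.le
    hP.sphere_outer_subset (sphere_disjoint_ball.notMem_of_mem_right hz)
  choose T hT norm_T_le using fun i ↦ exists_clm_eq_circleIntegral_inv_sub_sq_mul
    (hP.radius_pos i).le (hP.sphere_subset i) fun h ↦ hzi i (sphere_subset_closedBall h)
  have summable_T : Summable T := .of_norm_bounded (hsum.mul_left _) norm_T_le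
  refine ⟨(2 * Real.pi * I : ℂ)⁻¹ • (T₀ - ∑' i, T i), fun f p q hq hf ↦ ?_⟩
  have cauchy : ∀ᶠ F : Finset ι in atTop, T₀ f - ∑ i ∈ F, T i f =
      2 * Real.pi * I * deriv (fun w ↦ p.eval w / q.eval w) z := by
    simpa only [hT₀ f (fun w ↦ p.eval w / q.eval w) hf,
      fun i ↦ hT i f (fun w ↦ p.eval w / q.eval w) hf]
      using hP.eventually_sub_sum_circleIntegral_eq_deriv hz hzi p fun w hw ↦ hq ⟨w, hw⟩
  have tendsto : Tendsto (fun F : Finset ι ↦ T₀ f - ∑ i ∈ F, T i f) atTop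
      (𝓝 (T₀ f - (∑' i, T i) f)) :=
    tendsto_const_nhds.sub (summable_T.hasSum.mapL (ContinuousLinearMap.apply ℂ ℂ f))
  have limit : T₀ f - (∑' i, T i) f = _ :=
    tendsto_nhds_unique tendsto (tendsto_const_nhds.congr' (cauchy.mono fun _ h ↦ h.symm))
  rw [smul_apply, sub_apply, limit, smul_eq_mul, inv_mul_cancel_left₀ two_pi_I_ne_zero]

theorem ae_exists_isBPD [Countable ι] {X : Set ℂ} [CompactSpace X] (hP : IsDiskPacking c R a r)
    (hX : X = perforatedDisk c R a r) (hsum : Summable r)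
    (hlog : Summable fun i ↦ r i * Real.log (1 / r i)) :
    ∀ᵐ z : ℂ, ∀ hz : z ∈ X, ∃ d : Rx X →L[ℂ] ℂ, d ≠ 0 ∧ IsBPD X ⟨z, hz⟩ d := by
  subst hX
  filter_upwards [ae_mem_ball_and_forall_notMem_closedBall c R a r,
    ae_summable_div_norm_sub_sub_sq a hP.radius_pos hsum hlog (mul_pos two_pos hP.outer_pos)]
    with z hmem hsummable hz
  obtain ⟨hzR, hzi⟩ := hmem hz
  have dist_lt (i : ι) : dist z (a i) < 2 * R := by
    have := mem_ball'.mp (hP.ball_subset i (mem_ball_self (hP.radius_pos i)))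
    linarith [dist_triangle z c (a i), mem_ball.mp hzR]
  obtain ⟨D, hD⟩ := hP.exists_isDerivOnRational hzR hzi (hsummable dist_lt)
  exact IsDerivOnRational.exists_isBPD (z := ⟨z, hz⟩) hD

end IsDiskPacking

end SwissCheeseDerivations

namespace SwissCheese

variable {A : SwissCheese}

lemma cheeseSet_eq_perforatedDisk : A.cheeseSet =
    perforatedDisk (A.a 0) (A.r 0) (fun n : A.sig ↦ A.a n) (fun n : A.sig ↦ A.r n) := by
  have iUnion_sig : (⋃ n ∈ Ici 1, ball (A.a n) (A.r n)) = ⋃ n : A.sig, ball (A.a n) (A.r n) := by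
    ext z
    simp only [mem_iUnion, Subtype.exists, exists_prop]
    exact exists_congr fun n ↦
      ⟨fun ⟨hn, hz⟩ ↦ ⟨⟨hn, pos_of_mem_ball hz⟩, hz⟩, fun ⟨hn, hz⟩ ↦ ⟨hn.1, hz⟩⟩
  rw [cheeseSet, perforatedDisk, iUnion_sig]

lemma IsClassical.isSemiclassical (hA : A.IsClassical) : A.IsSemiclassical :=
  ⟨hA.1, hA.2.1, fun k hk ↦ ⟨ball_subset_closedBall.trans (hA.2.2 k hk).1, fun l hl hlk ↦
    subset_eq_empty (inter_subset_inter ball_subset_closedBall ball_subset_closedBall)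
      ((hA.2.2 k hk).2 l hl hlk)⟩⟩

lemma IsSemiclassical.isDiskPacking (hA : A.IsSemiclassical) :
    IsDiskPacking (A.a 0) (A.r 0) (fun n : A.sig ↦ A.a n) (fun n : A.sig ↦ A.r n) where
  outer_pos := hA.2.1
  radius_pos n := n.2.2
  ball_subset n := (hA.2.2 n n.2).1
  disjoint m n hmn := disjoint_iff_inter_eq_empty.mpr
    ((hA.2.2 m m.2).2 n n.2 (Subtype.coe_injective.ne hmn.symm))

lemma RadSummable.summable_sig (h : A.RadSummable) : Summable fun n : A.sig ↦ A.r n :=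
  ((summable_nat_add_iff 1).mp h).subtype A.sig

end SwissCheese

theorem stmt_6_general (A : SwissCheese) (hA : A.IsSemiclassical)
    (hlog : Summable fun n =>
      if 0 < A.r (n + 1) then A.r (n + 1) * Real.log (1 / A.r (n + 1)) else 0) :
    ∀ᵐ z ∂(MeasureTheory.volume : MeasureTheory.Measure ℂ),
      ∀ hz : z ∈ A.cheeseSet,
        ∃ d : Rx A.cheeseSet →L[ℂ] ℂ, d ≠ 0 ∧ IsBPD A.cheeseSet ⟨z, hz⟩ d := by
  have hlog_all : Summable fun n ↦ if 0 < A.r n then A.r n * Real.log (1 / A.r n) else 0 :=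
    (summable_nat_add_iff 1).mp hlog
  have hlog_sig : Summable fun n : A.sig ↦ A.r n * Real.log (1 / A.r n) :=
    (hlog_all.subtype A.sig).congr fun n ↦ if_pos n.2.2
  exact hA.isDiskPacking.ae_exists_isBPD A.cheeseSet_eq_perforatedDisk hA.1.summable_sig hlog_sig

/-- Browder: if `A` is a classical abstract Swiss cheese with
`∑_{n ∈ S_A} r_n log(1/r_n) < ∞`, then at Lebesgue-almost every point `z` of `X_A` there is
a non-zero bounded point derivation on `R(X_A)`. -/
theorem stmt_6 (A : SwissCheese) (hA : A.IsClassical)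
    (hlog : Summable fun n =>
      if 0 < A.r (n + 1) then A.r (n + 1) * Real.log (1 / A.r (n + 1)) else 0) :
    ∀ᵐ z ∂(MeasureTheory.volume : MeasureTheory.Measure ℂ),
      ∀ hz : z ∈ A.cheeseSet,
        ∃ d : Rx A.cheeseSet →L[ℂ] ℂ, d ≠ 0 ∧ IsBPD A.cheeseSet ⟨z, hz⟩ d :=
  stmt_6_general A hA.isSemiclassical hlog
end

section
/- Let ε > 0, let a ∈ ℂ and r > 0, let Δ = ball(a, r) and E = ℂ ∖ Δ. Then there exist a sequence (a_n)_{n ≥ 1} in ℂ, a sequence (r_n)_{n ≥ 1} of positive real numbers, and a sequence (f_n)_{n ≥ 1} of rational functions such that, writing U = ⋃_{k ≥ 1} ball(a_k, r_k): (1) ∑_{n ≥ 1} r_n < ε; (2) every pole of f_n lies in U for each n (so each f_n defines a holomorphic function on ℂ ∖ U); (3) the sequence (f_n) converges uniformly on ℂ ∖ U to a function f with f(z) = 0 for every z ∈ E ∖ U and f(z) ≠ 0 for every z ∈ Δ ∖ U; (4) U ⊆ {z ∈ ℂ : r − ε < |z − a| < r}; (5) ball(a_m, r_m) ∩ ball(a_n,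 r_n) = ∅ for all m ≠ n. -/
open Metric Set

/-!
The function `z ↦ (1 - ((z - a) / ρ) ^ N)⁻¹` is, for large `N`, close to `1` well inside the circle
`|z - a| = ρ` and close to `0` well outside. It is at most `s⁻¹` in modulus off `N` disks of radius
`3 * ρ * s / N` about its poles, whose radii add up to only `3 * ρ * s` however large `N` is.
Take circles with radii increasing to `r`, a summable sequence `s k`, and multiply the resulting
functions, choosing the `k`-th exponent so large that the `k`-th factor is at most `s (k + 1) ^ 2`
beyond its annulus.

A point of the disk lies inside all but finitely many annuli, so the product converges there to a
nonzero value; at a point with `|z - a| ≥ r` every factor is small and the product tends to `0`.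
Convergence is uniform because the factor that may be as large as `(s n)⁻¹` is always preceded by a
product of size `O(s n ^ 2)`.
-/

open Filter Polynomial Topology

section RootsOfUnity

theorem exists_pow_eq_one_norm_sub_le {w : ℂ} {N : ℕ} (hN : N ≠ 0) (hw : ‖1 - w ^ N‖ ≤ 1 / 2) :
    ∃ ζ : ℂ, ζ ^ N = 1 ∧ ‖w - ζ‖ ≤ 3 * ‖1 - w ^ N‖ / N := by
  have hN_one : (1 : ℝ) ≤ N := mod_cast Nat.one_le_iff_ne_zero.2 hN
  have hwN : w ^ N ≠ 0 := fun h ↦ by norm_num [h] at hw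
  set L : ℂ := Complex.log (w ^ N) / N with hL
  have hexp : Complex.exp L ^ N = w ^ N := by
    rw [← Complex.exp_nat_mul, hL, mul_div_cancel₀ _ (Nat.cast_ne_zero.2 hN), Complex.exp_log hwN]
  have hlog : ‖Complex.log (w ^ N)‖ ≤ 3 / 2 * ‖1 - w ^ N‖ := by
    rw [norm_sub_rev] at hw ⊢
    simpa using Complex.norm_log_one_add_half_le_self hw
  have hLle : ‖L‖ ≤ 3 / 2 * ‖1 - w ^ N‖ / N := by
    rw [hL, norm_div, Complex.norm_natCast]
    gcongr
  have hL_one : ‖L‖ ≤ 1 := by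
    refine hLle.trans ((div_le_one (by positivity)).2 ?_)
    linarith
  have hζ : (w / Complex.exp L) ^ N = 1 := by rw [div_pow, hexp, div_self hwN]
  refine ⟨w / Complex.exp L, hζ, ?_⟩
  calc ‖w - w / Complex.exp L‖ = ‖w / Complex.exp L * (Complex.exp L - 1)‖ := by
        rw [mul_sub_one, div_mul_cancel₀ _ (Complex.exp_ne_zero L)]
    _ = ‖Complex.exp L - 1‖ := by
        rw [norm_mul, Complex.norm_eq_one_of_pow_eq_one hζ hN, one_mul]
    _ ≤ 2 * ‖L‖ := Complex.norm_exp_sub_one_le hL_one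
    _ ≤ 2 * (3 / 2 * ‖1 - w ^ N‖ / N) := by gcongr
    _ = 3 * ‖1 - w ^ N‖ / N := by ring

theorem norm_one_sub_pow_le {R : Type*} [NormedRing R] [NormOneClass R] {u : R} (hu : ‖u‖ ≤ 1)
    (n : ℕ) : ‖1 - u ^ n‖ ≤ n * ‖1 - u‖ := by
  have hsum : ‖∑ i ∈ Finset.range n, u ^ i‖ ≤ n := by
    refine (norm_sum_le_of_le _ fun i _ ↦ ?_).trans_eq (by simp : ∑ _ ∈ Finset.range n, (1 : ℝ) = n)
    exact (norm_pow_le u i).trans (pow_le_one₀ (norm_nonneg u) hu)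
  rw [← geom_sum_mul_neg]
  exact (norm_mul_le _ _).trans (by gcongr)

theorem inv_le_norm_one_sub_of_pow_eq_one {u : ℂ} {N : ℕ} (hN : N ≠ 0) (hu : u ^ N = 1)
    (hu_ne : u ≠ 1) : (N : ℝ)⁻¹ ≤ ‖1 - u‖ := by
  have hnorm : ‖u‖ ≤ 1 := (Complex.norm_eq_one_of_pow_eq_one hu hN).le
  have hsum : ∑ i ∈ Finset.range N, (1 - u ^ i) = (N : ℂ) := by
    simp [Finset.sum_sub_distrib, geom_sum_eq hu_ne, hu]
  have hle : (N : ℝ) ≤ N * (N * ‖1 - u‖) :=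
    calc (N : ℝ) = ‖∑ i ∈ Finset.range N, (1 - u ^ i)‖ := by rw [hsum, Complex.norm_natCast]
      _ ≤ ∑ _ ∈ Finset.range N, N * ‖1 - u‖ := norm_sum_le_of_le _ fun i hi ↦
          (norm_one_sub_pow_le hnorm i).trans (by gcongr; exact (Finset.mem_range.1 hi).le)
      _ = N * (N * ‖1 - u‖) := by simp
  have hN_pos : (0 : ℝ) < N := by positivity
  rw [inv_le_iff_one_le_mul₀' hN_pos]
  exact le_of_mul_le_mul_left (by simpa using hle) hN_pos

theorem inv_le_norm_sub_of_pow_eq_one {ζ ξ : ℂ} {N : ℕ} (hN : N ≠ 0) (hζ : ζ ^ N = 1)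
    (hξ : ξ ^ N = 1) (hne : ζ ≠ ξ) : (N : ℝ)⁻¹ ≤ ‖ζ - ξ‖ := by
  have hζ_norm : ‖ζ‖ = 1 := Complex.norm_eq_one_of_pow_eq_one hζ hN
  have hζ_ne : ζ ≠ 0 := norm_ne_zero_iff.1 (by simp [hζ_norm])
  have hquot : (ξ / ζ) ^ N = 1 := by rw [div_pow, hζ, hξ, div_one]
  calc (N : ℝ)⁻¹ ≤ ‖1 - ξ / ζ‖ :=
        inv_le_norm_one_sub_of_pow_eq_one hN hquot fun h ↦ hne ((div_eq_one_iff_eq hζ_ne).1 h).symm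
    _ = ‖ζ * (1 - ξ / ζ)‖ := by rw [norm_mul, hζ_norm, one_mul]
    _ = ‖ζ - ξ‖ := by rw [mul_one_sub, mul_div_cancel₀ _ hζ_ne]

end RootsOfUnity

section PowerBarrier

variable {𝕜 : Type*} [NormedField 𝕜]

theorem tendstoUniformlyOn_inv_one_sub_pow_closedBall {t : ℝ} (ht0 : 0 ≤ t) (ht : t < 1) :
    TendstoUniformlyOn (fun (N : ℕ) (w : 𝕜) ↦ (1 - w ^ N)⁻¹) (fun _ ↦ 1) atTop
      (closedBall 0 t) := by
  have hpow : Tendsto (fun x : ℕ × 𝕜 ↦ x.2 ^ x.1) (atTop ×ˢ 𝓟 (closedBall 0 t)) (𝓝 0) := by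
    refine squeeze_zero_norm' ?_ ((tendsto_pow_atTop_nhds_zero_of_lt_one ht0 ht).comp tendsto_fst)
    filter_upwards [tendsto_snd.eventually (mem_principal_self (closedBall (0 : 𝕜) t))] with x hx
    rw [norm_pow]
    exact pow_le_pow_left₀ (norm_nonneg _) (mem_closedBall_zero_iff.1 hx) _
  rw [← tendsto_prod_principal_iff]
  simpa [Function.HasUncurry.uncurry] using (hpow.const_sub 1).inv₀ (by simp)

theorem tendstoUniformlyOn_inv_one_sub_pow_compl_ball {T : ℝ} (hT : 1 < T) :
    TendstoUniformlyOn (fun (N : ℕ) (w : 𝕜) ↦ (1 - w ^ N)⁻¹) (fun _ ↦ 0) atTop (ball 0 T)ᶜ := by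
  have hpow : Tendsto (fun x : ℕ × 𝕜 ↦ ‖1 - x.2 ^ x.1‖) (atTop ×ˢ 𝓟 (ball 0 T)ᶜ) atTop := by
    refine tendsto_atTop_mono' _ ?_ (tendsto_atTop_add_const_right _ (-1)
      ((tendsto_pow_atTop_atTop_of_one_lt hT).comp tendsto_fst))
    filter_upwards [tendsto_snd.eventually (mem_principal_self (ball (0 : 𝕜) T)ᶜ)] with x hx
    have hTx : T ≤ ‖x.2‖ := by simpa using hx
    calc T ^ x.1 + -1 ≤ ‖x.2‖ ^ x.1 + -1 := by gcongr
      _ = ‖x.2 ^ x.1‖ - ‖(1 : 𝕜)‖ := by rw [norm_pow, norm_one, sub_eq_add_neg]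
      _ ≤ ‖1 - x.2 ^ x.1‖ := by rw [norm_sub_rev]; exact norm_sub_norm_le _ _
  rw [← tendsto_prod_principal_iff]
  exact tendsto_inv₀_cobounded.comp (tendsto_norm_atTop_iff_cobounded.1 hpow)

end PowerBarrier

section Products

theorem exists_tendstoUniformlyOn_of_norm_sub_le {α E : Type*} [NormedAddCommGroup E]
    [CompleteSpace E] {P : ℕ → α → E} {S : Set α} {u : ℕ → ℝ} (hu : Summable u)
    (hP : ∀ n, ∀ z ∈ S, ‖P (n + 1) z - P n z‖ ≤ u n) :
    ∃ f, TendstoUniformlyOn P f atTop S := by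
  refine ⟨P 0 + fun z ↦ ∑' n, (P (n + 1) z - P n z), ?_⟩
  have hsum := tendstoUniformlyOn_tsum_nat hu hP
  rw [Metric.tendstoUniformlyOn_iff] at hsum ⊢
  refine fun ε hε ↦ (hsum ε hε).mono fun n hn z hz ↦ ?_
  have := hn z hz
  rw [Finset.sum_range_sub (fun k ↦ P k z)] at this
  rwa [Pi.add_apply, ← add_sub_cancel (P 0 z) (P n z), dist_add_left]

theorem ne_zero_of_tendsto_prod {𝕜 : Type*} [NormedField 𝕜] [CompleteSpace 𝕜] {g : ℕ → 𝕜} {l : 𝕜}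
    (hg : ∀ k, g k ≠ 0) (hsum : Summable fun k ↦ ‖g k - 1‖)
    (hl : Tendsto (fun n ↦ ∏ k ∈ Finset.range n, g k) atTop (𝓝 l)) : l ≠ 0 := by
  have hprod : Tendsto (fun n ↦ ∏ k ∈ Finset.range n, (1 + (g k - 1))) atTop
      (𝓝 (∏' k, (1 + (g k - 1)))) :=
    (multipliable_one_add_of_summable hsum).hasProd.tendsto_prod_nat
  simp only [add_sub_cancel] at hprod
  rw [tendsto_nhds_unique hl hprod]
  simpa using tprod_one_add_ne_zero_of_summable (f := fun k ↦ g k - 1) (by simpa using hg) hsum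

variable {𝕜 : Type*} [NormedField 𝕜] {g : ℕ → 𝕜} {s : ℕ → ℝ}

theorem norm_prod_range_le_of_norm_le_sq (hs_pos : ∀ k, 0 < s k) (hs_le : ∀ k, s k ≤ 1) {n : ℕ}
    (hg : ∀ k < n, ‖g k‖ ≤ s (k + 1) ^ 2) :
    ‖∏ k ∈ Finset.range n, g k‖ ≤ (s n / s 0) ^ 2 := by
  induction n with
  | zero => simp [(hs_pos 0).ne']
  | succ n ih =>
    have hratio : (s n / s 0) ^ 2 ≤ (s 0 ^ 2)⁻¹ := by
      rw [div_pow, div_eq_mul_inv]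
      exact mul_le_of_le_one_left (by positivity) (pow_le_one₀ (hs_pos n).le (hs_le n))
    rw [Finset.prod_range_succ, norm_mul]
    calc ‖∏ k ∈ Finset.range n, g k‖ * ‖g n‖ ≤ (s 0 ^ 2)⁻¹ * s (n + 1) ^ 2 := by
          gcongr
          · exact (ih fun k hk ↦ hg k (hk.trans n.lt_succ_self)).trans hratio
          · exact hg n n.lt_succ_self
      _ = (s (n + 1) / s 0) ^ 2 := by rw [div_pow, div_eq_inv_mul]

theorem norm_prod_range_succ_le_of_norm_le_sq (hs_pos : ∀ k, 0 < s k) (hs_le : ∀ k, s k ≤ 1)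
    {n : ℕ} (hg : ∀ k < n, ‖g k‖ ≤ s (k + 1) ^ 2) (hgn : ‖g n‖ ≤ (s n)⁻¹) :
    ‖∏ k ∈ Finset.range (n + 1), g k‖ ≤ s n / s 0 ^ 2 := by
  have hn := hs_pos n
  rw [Finset.prod_range_succ, norm_mul]
  calc ‖∏ k ∈ Finset.range n, g k‖ * ‖g n‖ ≤ (s n / s 0) ^ 2 * (s n)⁻¹ := by
        gcongr
        exact norm_prod_range_le_of_norm_le_sq hs_pos hs_le hg
    _ = s n / s 0 ^ 2 := by field_simp

theorem norm_prod_range_le_exp_sum (hs_pos : ∀ k, 0 < s k) (hs_le : ∀ k, s k ≤ 1)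
    (hg_le : ∀ k, ‖g k‖ ≤ (s k)⁻¹)
    (hg : ∀ n, (∀ k < n, ‖g k‖ ≤ s (k + 1) ^ 2) ∨ ‖g n - 1‖ ≤ s n) (n : ℕ) :
    ‖∏ k ∈ Finset.range n, g k‖ ≤ Real.exp (∑ k ∈ Finset.range n, s k) / s 0 ^ 2 := by
  induction n with
  | zero =>
    simpa using (one_le_inv₀ (pow_pos (hs_pos 0) 2)).2 (pow_le_one₀ (hs_pos 0).le (hs_le 0))
  | succ n ih =>
    rcases hg n with hsmall | hnear
    · refine (norm_prod_range_succ_le_of_norm_le_sq hs_pos hs_le hsmall (hg_le n)).trans ?_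
      gcongr
      exact (hs_le n).trans (Real.one_le_exp (Finset.sum_nonneg fun k _ ↦ (hs_pos k).le))
    · have hgn : ‖g n‖ ≤ Real.exp (s n) :=
        calc ‖g n‖ ≤ ‖g n - 1‖ + ‖(1 : 𝕜)‖ := norm_le_norm_sub_add _ _
          _ ≤ s n + 1 := by rw [norm_one]; gcongr
          _ ≤ Real.exp (s n) := Real.add_one_le_exp _
      rw [Finset.prod_range_succ, norm_mul, Finset.sum_range_succ, Real.exp_add, mul_div_right_comm]
      gcongr

theorem norm_prod_range_succ_sub_le (hs_pos : ∀ k, 0 < s k) (hs_le : ∀ k, s k ≤ 1)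
    (hg_le : ∀ k, ‖g k‖ ≤ (s k)⁻¹)
    (hg : ∀ n, (∀ k < n, ‖g k‖ ≤ s (k + 1) ^ 2) ∨ ‖g n - 1‖ ≤ s n) (hs : Summable s) (n : ℕ) :
    ‖∏ k ∈ Finset.range (n + 1), g k - ∏ k ∈ Finset.range n, g k‖ ≤
      2 * Real.exp (∑' k, s k) / s 0 ^ 2 * s n := by
  have hn := hs_pos n
  have h0 := hs_pos 0
  rcases hg n with hsmall | hnear
  · have hPn : ‖∏ k ∈ Finset.range n, g k‖ ≤ s n / s 0 ^ 2 := by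
      refine (norm_prod_range_le_of_norm_le_sq hs_pos hs_le hsmall).trans ?_
      rw [div_pow]
      gcongr
      exact pow_le_of_le_one hn.le (hs_le n) two_ne_zero
    calc _ ≤ s n / s 0 ^ 2 + s n / s 0 ^ 2 := (norm_sub_le _ _).trans <| add_le_add
          (norm_prod_range_succ_le_of_norm_le_sq hs_pos hs_le hsmall (hg_le n)) hPn
      _ = 2 * 1 / s 0 ^ 2 * s n := by ring
      _ ≤ 2 * Real.exp (∑' k, s k) / s 0 ^ 2 * s n := by
        gcongr
        exact Real.one_le_exp (tsum_nonneg fun k ↦ (hs_pos k).le)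
  · rw [Finset.prod_range_succ, ← mul_sub_one, norm_mul]
    gcongr
    refine (norm_prod_range_le_exp_sum hs_pos hs_le hg_le hg n).trans ?_
    gcongr
    refine (Real.exp_le_exp.2 (hs.sum_le_tsum _ fun k _ ↦ (hs_pos k).le)).trans ?_
    linarith [Real.exp_pos (∑' k, s k)]

end Products

section Circle

/-- A polynomial in `z` vanishing at `N` equally spaced points of the circle of centre `a` and
radius `ρ`; its reciprocal is close to `1` well inside the circle and close to `0` well outside. -/
noncomputable def circlePoly (a : ℂ) (ρ : ℝ) (N : ℕ) : ℂ[X] :=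
  1 - (C (ρ : ℂ)⁻¹ * (X - C a)) ^ N

/-- The zeros of `circlePoly a ρ N`: the vertices of a regular `N`-gon inscribed in the circle of
centre `a` and radius `ρ`. -/
noncomputable def circlePoints (a : ℂ) (ρ : ℝ) (N : ℕ) : Finset ℂ :=
  (nthRootsFinset N (1 : ℂ)).image fun ζ ↦ a + ρ * ζ

variable {a z : ℂ} {ρ s : ℝ} {N : ℕ}

theorem eval_circlePoly : (circlePoly a ρ N).eval z = 1 - ((z - a) / ρ) ^ N := by
  simp [circlePoly, div_eq_inv_mul]

theorem mem_circlePoints (hN : N ≠ 0) {c : ℂ} :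
    c ∈ circlePoints a ρ N ↔ ∃ ζ : ℂ, ζ ^ N = 1 ∧ a + ρ * ζ = c := by
  simp [circlePoints, mem_nthRootsFinset (Nat.pos_of_ne_zero hN)]

theorem card_circlePoints_le : (circlePoints a ρ N).card ≤ N := by
  classical
  calc (circlePoints a ρ N).card ≤ (nthRootsFinset N (1 : ℂ)).card := Finset.card_image_le
    _ ≤ (nthRoots N (1 : ℂ)).card := by
      rw [nthRootsFinset_def]
      exact Multiset.toFinset_card_le _
    _ ≤ N := card_nthRoots N 1

theorem dist_of_mem_circlePoints (hρ : 0 ≤ ρ) (hN : N ≠ 0) {c : ℂ} (hc : c ∈ circlePoints a ρ N) :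
    dist c a = ρ := by
  obtain ⟨ζ, hζ, rfl⟩ := (mem_circlePoints hN).1 hc
  simp [dist_eq_norm, Complex.norm_eq_one_of_pow_eq_one hζ hN, abs_of_nonneg hρ]

theorem pairwiseDisjoint_ball_circlePoints (hρ : 0 ≤ ρ) (hN : N ≠ 0) {δ : ℝ}
    (hδ : 2 * δ ≤ ρ / N) : (circlePoints a ρ N : Set ℂ).PairwiseDisjoint fun c ↦ ball c δ := by
  intro c hc d hd hne
  obtain ⟨ζ, hζ, rfl⟩ := (mem_circlePoints hN).1 hc
  obtain ⟨ξ, hξ, rfl⟩ := (mem_circlePoints hN).1 hd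
  refine ball_disjoint_ball ?_
  calc δ + δ ≤ ρ * (N : ℝ)⁻¹ := by rw [← two_mul, ← div_eq_mul_inv]; exact hδ
    _ ≤ ρ * ‖ζ - ξ‖ := by
      gcongr
      exact inv_le_norm_sub_of_pow_eq_one hN hζ hξ fun h ↦ hne (by rw [h])
    _ = dist (a + ρ * ζ) (a + ρ * ξ) := by
      rw [dist_add_left, dist_eq_norm, ← mul_sub, norm_mul, Complex.norm_of_nonneg hρ]

theorem le_norm_eval_circlePoly (hρ : 0 < ρ) (hN : N ≠ 0) (hs : s ≤ 1 / 2)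
    (hz : ∀ c ∈ circlePoints a ρ N, 3 * ρ * s / N ≤ dist z c) :
    s ≤ ‖(circlePoly a ρ N).eval z‖ := by
  rw [eval_circlePoly]
  by_contra! hlt
  obtain ⟨ζ, hζ, hle⟩ := exists_pow_eq_one_norm_sub_le hN (hlt.le.trans hs)
  refine (hz _ ((mem_circlePoints hN).2 ⟨ζ, hζ, rfl⟩)).not_gt ?_
  have hscale : z - (a + ρ * ζ) = ρ * ((z - a) / ρ - ζ) := by
    have : (ρ : ℂ) ≠ 0 := mod_cast hρ.ne'
    field_simp
    ring
  calc dist z (a + ρ * ζ) = ρ * ‖(z - a) / ρ - ζ‖ := by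
        rw [dist_eq_norm, hscale, norm_mul, Complex.norm_of_nonneg hρ.le]
    _ ≤ ρ * (3 * ‖1 - ((z - a) / ρ) ^ N‖ / N) := by gcongr
    _ < ρ * (3 * s / N) := by gcongr
    _ = 3 * ρ * s / N := by ring

theorem eventually_norm_inv_eval_circlePoly_sub_one_le {σ η : ℝ} (hσ : 0 ≤ σ) (hσρ : σ < ρ)
    (hη : 0 < η) : ∀ᶠ N in atTop, ∀ z, dist z a ≤ σ → ‖((circlePoly a ρ N).eval z)⁻¹ - 1‖ ≤ η := by
  have hρ : 0 < ρ := hσ.trans_lt hσρ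
  have hunif := Metric.tendstoUniformlyOn_iff.1 (tendstoUniformlyOn_inv_one_sub_pow_closedBall
    (𝕜 := ℂ) (div_nonneg hσ hρ.le) ((div_lt_one hρ).2 hσρ)) η hη
  refine hunif.mono fun N hN z hz ↦ ?_
  rw [eval_circlePoly, ← dist_eq_norm, dist_comm]
  refine (hN _ (mem_closedBall_zero_iff.2 ?_)).le
  rw [norm_div, Complex.norm_of_nonneg hρ.le, ← dist_eq_norm]
  gcongr

theorem eventually_norm_inv_eval_circlePoly_le {τ θ : ℝ} (hρ : 0 < ρ) (hρτ : ρ < τ) (hθ : 0 < θ) :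
    ∀ᶠ N in atTop, ∀ z, τ ≤ dist z a → ‖((circlePoly a ρ N).eval z)⁻¹‖ ≤ θ := by
  have hunif := Metric.tendstoUniformlyOn_iff.1
    (tendstoUniformlyOn_inv_one_sub_pow_compl_ball (𝕜 := ℂ) ((one_lt_div hρ).2 hρτ)) θ hθ
  refine hunif.mono fun N hN z hz ↦ ?_
  rw [eval_circlePoly, ← dist_zero_left]
  refine (hN _ ?_).le
  rw [mem_compl_iff, mem_ball_zero_iff, not_lt, norm_div, Complex.norm_of_nonneg hρ.le,
    ← dist_eq_norm]
  gcongr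

end Circle

section AnnularBarrier

/-- The reciprocal of `q` is a barrier across the annulus `σ < dist z a < τ`: it is `s`-close to
`1` inside, at most `θ` outside, and at most `s⁻¹` off disjoint disks of radius `δ` about the
points of `F`, which lie in the annulus and whose radii add up to at most `3 * τ * s`. -/
structure IsAnnularBarrier (a : ℂ) (σ τ s θ : ℝ) (F : Finset ℂ) (δ : ℝ) (q : ℂ[X]) : Prop where
  nonempty : F.Nonempty
  radius_pos : 0 < δ
  card_mul_radius_le : F.card * δ ≤ 3 * τ * s
  ball_subset : ∀ c ∈ F, ball c δ ⊆ {z | σ < dist z a ∧ dist z a < τ}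
  pairwiseDisjoint : (F : Set ℂ).PairwiseDisjoint fun c ↦ ball c δ
  le_norm_eval : ∀ z, (∀ c ∈ F, z ∉ ball c δ) → s ≤ ‖q.eval z‖
  norm_inv_eval_sub_one_le : ∀ z, dist z a ≤ σ → ‖(q.eval z)⁻¹ - 1‖ ≤ s
  norm_inv_eval_le : ∀ z, τ ≤ dist z a → ‖(q.eval z)⁻¹‖ ≤ θ

theorem exists_isAnnularBarrier (a : ℂ) {σ τ s θ : ℝ} (hσ : 0 ≤ σ) (hστ : σ < τ) (hs_pos : 0 < s)
    (hs : s ≤ 1 / 6) (hθ : 0 < θ) : ∃ F δ q, IsAnnularBarrier a σ τ s θ F δ q := by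
  obtain ⟨ρ, hσρ, hρτ⟩ := exists_between hστ
  have hρ : 0 < ρ := hσ.trans_lt hσρ
  have hradius : ∀ᶠ N : ℕ in atTop, 3 * ρ * s / N < min (ρ - σ) (τ - ρ) :=
    (tendsto_const_div_atTop_nhds_zero_nat _).eventually_lt_const (by simp [hσρ, hρτ])
  obtain ⟨N, hnear, hfar, hradius, hN⟩ :=
    ((eventually_norm_inv_eval_circlePoly_sub_one_le (a := a) hσ hσρ hs_pos).and <|
      (eventually_norm_inv_eval_circlePoly_le hρ hρτ hθ).and <|
      hradius.and <| eventually_ne_atTop 0).exists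
  have hN_pos : (0 : ℝ) < N := by positivity
  refine ⟨circlePoints a ρ N, 3 * ρ * s / N, circlePoly a ρ N,
    ⟨a + ρ, (mem_circlePoints hN).2 ⟨1, one_pow N, by rw [mul_one]⟩⟩, by positivity, ?_, ?_, ?_,
    ?_, hnear, hfar⟩
  · calc (circlePoints a ρ N).card * (3 * ρ * s / N) ≤ N * (3 * ρ * s / N) := by
          gcongr
          exact card_circlePoints_le
      _ = 3 * ρ * s := mul_div_cancel₀ _ hN_pos.ne'
      _ ≤ 3 * τ * s := by gcongr
  · intro c hc z hz
    have hca : dist c a = ρ := dist_of_mem_circlePoints hρ.le hN hc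
    have hzc : dist z c < 3 * ρ * s / N := hz
    have hmin := lt_min_iff.1 hradius
    constructor
    · linarith [dist_triangle_left c a z]
    · linarith [dist_triangle z c a]
  · refine pairwiseDisjoint_ball_circlePoints hρ.le hN ?_
    rw [← mul_div_assoc]
    gcongr
    nlinarith
  · intro z hz
    exact le_norm_eval_circlePoly hρ hN (hs.trans (by norm_num)) fun c hc ↦ not_lt.1 (hz c hc)

end AnnularBarrier

section Disks

/-- The union of the disks of radius `δ k` about the points of `F k`, over all `k`. -/
def diskUnion {ι X : Type*} [PseudoMetricSpace X] (F : ι → Finset X) (δ : ι → ℝ) : Set X :=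
  ⋃ i : Σ k, F k, ball (i.2 : X) (δ i.1)

theorem notMem_ball_of_notMem_diskUnion {ι X : Type*} [PseudoMetricSpace X] {F : ι → Finset X}
    {δ : ι → ℝ} {z : X} (hz : z ∉ diskUnion F δ) {k : ι} {c : X} (hc : c ∈ F k) :
    z ∉ ball c (δ k) :=
  fun h ↦ hz (mem_iUnion.2 ⟨⟨k, c, hc⟩, h⟩)

theorem summable_sigma_and_tsum_le_of_card_mul_le {ι X : Type*} {F : ι → Finset X} {δ u : ι → ℝ}
    (hδ : ∀ k, 0 ≤ δ k) (hu : Summable u) (hle : ∀ k, (F k).card * δ k ≤ u k) :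
    Summable (fun i : Σ k, F k ↦ δ i.1) ∧ ∑' i : Σ k, F k, δ i.1 ≤ ∑' k, u k := by
  have hfiber (k : ι) : ∑' _ : F k, δ k = (F k).card * δ k := by simp
  have hcard : Summable fun k ↦ (F k).card * δ k :=
    hu.of_nonneg_of_le (fun k ↦ mul_nonneg (Nat.cast_nonneg _) (hδ k)) hle
  have hsigma : Summable fun i : Σ k, F k ↦ δ i.1 :=
    (summable_sigma_of_nonneg fun i ↦ hδ i.1).2
      ⟨fun k ↦ (hasSum_fintype _).summable, by simpa only [hfiber] using hcard⟩
  refine ⟨hsigma, ?_⟩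
  rw [hsigma.tsum_sigma' fun k ↦ (hasSum_fintype _).summable]
  simpa only [hfiber] using hcard.tsum_le_tsum hle hu

end Disks

/-- A sequence of barriers across consecutive annuli `σ k < dist z a < σ (k + 1)`. The `k`-th one
is at most `s (k + 1) ^ 2` outside its annulus, which compensates for the next one reaching size
`(s (k + 1))⁻¹` within its own. -/
structure IsBarrierChain (a : ℂ) (σ s : ℕ → ℝ) (F : ℕ → Finset ℂ) (δ : ℕ → ℝ) (q : ℕ → ℂ[X]) :
    Prop where
  monotone : Monotone σ
  pos : ∀ k, 0 < s k
  le_one : ∀ k, s k ≤ 1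
  summable : Summable s
  barrier : ∀ k,
    IsAnnularBarrier a (σ k) (σ (k + 1)) (s k) (s (k + 1) ^ 2) (F k) (δ k) (q k)

namespace IsBarrierChain

variable {a : ℂ} {σ s : ℕ → ℝ} {F : ℕ → Finset ℂ} {δ : ℕ → ℝ} {q : ℕ → ℂ[X]} {z : ℂ}

theorem le_norm_eval (h : IsBarrierChain a σ s F δ q) (hz : z ∉ diskUnion F δ) (k : ℕ) :
    s k ≤ ‖(q k).eval z‖ :=
  (h.barrier k).le_norm_eval z fun _ hc ↦ notMem_ball_of_notMem_diskUnion hz hc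

theorem eval_ne_zero (h : IsBarrierChain a σ s F δ q) (hz : z ∉ diskUnion F δ) (k : ℕ) :
    (q k).eval z ≠ 0 :=
  norm_pos_iff.1 ((h.pos k).trans_le (h.le_norm_eval hz k))

theorem norm_inv_eval_le_inv (h : IsBarrierChain a σ s F δ q) (hz : z ∉ diskUnion F δ) (k : ℕ) :
    ‖((q k).eval z)⁻¹‖ ≤ (s k)⁻¹ := by
  rw [norm_inv]
  exact inv_anti₀ (h.pos k) (h.le_norm_eval hz k)

theorem norm_inv_eval_le_sq_of_lt (h : IsBarrierChain a σ s F δ q) {n k : ℕ}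
    (hz : σ n ≤ dist z a) (hk : k < n) : ‖((q k).eval z)⁻¹‖ ≤ s (k + 1) ^ 2 :=
  (h.barrier k).norm_inv_eval_le z ((h.monotone hk).trans hz)

theorem norm_prod_inv_eval_succ_sub_le (h : IsBarrierChain a σ s F δ q)
    (hz : z ∉ diskUnion F δ) (n : ℕ) :
    ‖∏ k ∈ Finset.range (n + 1), ((q k).eval z)⁻¹ - ∏ k ∈ Finset.range n, ((q k).eval z)⁻¹‖ ≤
      2 * Real.exp (∑' k, s k) / s 0 ^ 2 * s n := by
  refine norm_prod_range_succ_sub_le h.pos h.le_one (h.norm_inv_eval_le_inv hz) (fun m ↦ ?_)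
    h.summable n
  rcases le_total (σ m) (dist z a) with hm | hm
  · exact .inl fun k hk ↦ h.norm_inv_eval_le_sq_of_lt hm hk
  · exact .inr ((h.barrier m).norm_inv_eval_sub_one_le z hm)

theorem tendsto_prod_inv_eval_zero (h : IsBarrierChain a σ s F δ q) (hz : ∀ k, σ k ≤ dist z a) :
    Tendsto (fun n ↦ ∏ k ∈ Finset.range n, ((q k).eval z)⁻¹) atTop (𝓝 0) := by
  have hs : Tendsto (fun n ↦ (s n / s 0) ^ 2) atTop (𝓝 0) := by
    simpa using (h.summable.tendsto_atTop_zero.div_const (s 0)).pow 2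
  exact squeeze_zero_norm (fun n ↦ norm_prod_range_le_of_norm_le_sq h.pos h.le_one
    fun k hk ↦ h.norm_inv_eval_le_sq_of_lt (hz n) hk) hs

theorem ne_zero_of_tendsto_prod_inv_eval (h : IsBarrierChain a σ s F δ q)
    (hz : z ∉ diskUnion F δ) {K : ℕ} (hK : dist z a ≤ σ K) {l : ℂ}
    (hl : Tendsto (fun n ↦ ∏ k ∈ Finset.range n, ((q k).eval z)⁻¹) atTop (𝓝 l)) : l ≠ 0 := by
  refine ne_zero_of_tendsto_prod (fun k ↦ inv_ne_zero (h.eval_ne_zero hz k)) ?_ hl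
  refine h.summable.of_norm_bounded_eventually_nat ?_
  filter_upwards [eventually_ge_atTop K] with k hk
  rw [norm_norm]
  exact (h.barrier k).norm_inv_eval_sub_one_le z (hK.trans (h.monotone hk))

theorem exists_tendstoUniformlyOn_prod_inv_eval (h : IsBarrierChain a σ s F δ q) :
    ∃ f : ℂ → ℂ,
      TendstoUniformlyOn (fun n z ↦ ∏ k ∈ Finset.range n, ((q k).eval z)⁻¹) f atTop
        (diskUnion F δ)ᶜ ∧
      (∀ z ∉ diskUnion F δ, (∀ k, σ k ≤ dist z a) → f z = 0) ∧
      ∀ z ∉ diskUnion F δ, ∀ K, dist z a ≤ σ K → f z ≠ 0 := by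
  obtain ⟨f, hf⟩ := exists_tendstoUniformlyOn_of_norm_sub_le
    (P := fun n z ↦ ∏ k ∈ Finset.range n, ((q k).eval z)⁻¹) (h.summable.mul_left _)
    fun n z hz ↦ h.norm_prod_inv_eval_succ_sub_le hz n
  exact ⟨f, hf,
    fun z hz hfar ↦ tendsto_nhds_unique (hf.tendsto_at hz) (h.tendsto_prod_inv_eval_zero hfar),
    fun z hz K hK ↦ h.ne_zero_of_tendsto_prod_inv_eval hz hK (hf.tendsto_at hz)⟩

theorem ball_subset (h : IsBarrierChain a σ s F δ q) (i : Σ k, F k) :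
    ball (i.2 : ℂ) (δ i.1) ⊆ {z | σ i.1 < dist z a ∧ dist z a < σ (i.1 + 1)} :=
  (h.barrier i.1).ball_subset i.2 i.2.2

theorem diskUnion_subset (h : IsBarrierChain a σ s F δ q) {x y : ℝ} (hσ : ∀ k, σ k ∈ Ioo x y) :
    diskUnion F δ ⊆ {z | x < dist z a ∧ dist z a < y} :=
  iUnion_subset fun i _ hz ↦
    ⟨(hσ i.1).1.trans (h.ball_subset i hz).1, (h.ball_subset i hz).2.trans (hσ (i.1 + 1)).2⟩

theorem disjoint_ball_of_fst_lt (h : IsBarrierChain a σ s F δ q) {i j : Σ k, F k}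
    (hij : i.1 < j.1) :
    Disjoint (ball (i.2 : ℂ) (δ i.1)) (ball (j.2 : ℂ) (δ j.1)) :=
  disjoint_left.2 fun _ hi hj ↦
    ((h.ball_subset i hi).2.trans_le (h.monotone hij)).not_gt (h.ball_subset j hj).1

theorem pairwise_disjoint_ball (h : IsBarrierChain a σ s F δ q) :
    Pairwise fun i j : Σ k, F k ↦ Disjoint (ball (i.2 : ℂ) (δ i.1)) (ball (j.2 : ℂ) (δ j.1)) := by
  rintro ⟨k, c⟩ ⟨l, d⟩ hne
  rcases lt_trichotomy k l with hkl | rfl | hlk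
  · exact h.disjoint_ball_of_fst_lt hkl
  · exact (h.barrier k).pairwiseDisjoint c.2 d.2 fun hcd ↦ hne (by rw [Subtype.ext hcd])
  · exact (h.disjoint_ball_of_fst_lt hlk).symm

theorem summable_and_tsum_radius_le (h : IsBarrierChain a σ s F δ q) {r : ℝ} (hr : ∀ k, σ k ≤ r) :
    Summable (fun i : Σ k, F k ↦ δ i.1) ∧ ∑' i : Σ k, F k, δ i.1 ≤ 3 * r * ∑' k, s k := by
  rw [← tsum_mul_left]
  refine summable_sigma_and_tsum_le_of_card_mul_le (fun k ↦ (h.barrier k).radius_pos.le)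
    (h.summable.mul_left _) fun k ↦ (h.barrier k).card_mul_radius_le.trans ?_
  have := h.pos k
  gcongr
  exact hr (k + 1)

theorem nonempty_equiv (h : IsBarrierChain a σ s F δ q) : Nonempty (ℕ ≃ Σ k, F k) := by
  have (k : ℕ) : Nonempty (F k) := (h.barrier k).nonempty.to_subtype
  obtain ⟨_⟩ := nonempty_denumerable (Σ k, F k)
  exact ⟨(Denumerable.eqv _).symm⟩

end IsBarrierChain

theorem exists_isBarrierChain (a : ℂ) {σ : ℕ → ℝ} (hσ : StrictMono σ) (hσ_nonneg : ∀ k, 0 ≤ σ k)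
    {η : ℝ} (hη : 0 < η) : ∃ s F δ q, IsBarrierChain a σ s F δ q ∧ ∑' k, s k ≤ η := by
  obtain ⟨s, hs_pos, S, hsS, hS⟩ := posSumOfEncodable (lt_min hη (by norm_num : (0 : ℝ) < 1 / 6)) ℕ
  have hs_le (k : ℕ) : s k ≤ 1 / 6 :=
    (le_hasSum hsS k fun j _ ↦ (hs_pos j).le).trans (hS.trans (min_le_right _ _))
  choose F δ q hbarrier using fun k ↦ exists_isAnnularBarrier a (hσ_nonneg k)
    (hσ k.lt_succ_self) (hs_pos k) (hs_le k) (pow_pos (hs_pos (k + 1)) 2)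
  refine ⟨s, F, δ, q, ⟨hσ.monotone, hs_pos, fun k ↦ (hs_le k).trans (by norm_num), hsS.summable,
    hbarrier⟩, ?_⟩
  rw [hsS.tsum_eq]
  exact hS.trans (min_le_left _ _)

/-- Körner's lemma: given `ε > 0` and an open disk `Δ = ball(a, r)`, there
exist sequences of centres `ctr`, positive radii `rad`, and rational functions
`z ↦ (p n).eval z / (q n).eval z` whose poles lie in `U = ⋃ k, ball(ctr k, rad k)` (i.e.
`q n` is nonvanishing off `U`), such that `∑ rad n < ε`, the rational functions converge
uniformly on `ℂ ∖ U` to a function `f` vanishing exactly on `E ∖ U` (where `E = ℂ ∖ Δ`),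
`U` lies in the annulus `{r − ε < |z − a| < r}`, and the disks `ball(ctr n, rad n)` are
pairwise disjoint. -/
theorem stmt_7 (ε : ℝ) (hε : 0 < ε) (a : ℂ) (r : ℝ) (hr : 0 < r) :
    ∃ (ctr : ℕ → ℂ) (rad : ℕ → ℝ) (p q : ℕ → Polynomial ℂ) (f : ℂ → ℂ) (U : Set ℂ),
      U = (⋃ k, ball (ctr k) (rad k)) ∧
      (∀ n, 0 < rad n) ∧
      Summable rad ∧ (∑' n, rad n) < ε ∧
      (∀ n : ℕ, ∀ z ∈ Uᶜ, (q n).eval z ≠ 0) ∧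
      TendstoUniformlyOn (fun n z => (p n).eval z / (q n).eval z) f Filter.atTop Uᶜ ∧
      (∀ z ∈ (ball a r)ᶜ \ U, f z = 0) ∧
      (∀ z ∈ ball a r \ U, f z ≠ 0) ∧
      U ⊆ {z : ℂ | r - ε < dist z a ∧ dist z a < r} ∧
      (∀ m n : ℕ, m ≠ n → ball (ctr m) (rad m) ∩ ball (ctr n) (rad n) = ∅) := by
  obtain ⟨σ, hσ_mono, hσ_mem, hσ_lim⟩ :=
    exists_seq_strictMono_tendsto' (max_lt hr (sub_lt_self r hε))
  obtain ⟨s, F, δ, q, hchain, hs⟩ := exists_isBarrierChain a hσ_mono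
    (fun k ↦ (le_max_left _ _).trans (hσ_mem k).1.le) (show 0 < ε / (6 * r) by positivity)
  obtain ⟨e⟩ := hchain.nonempty_equiv
  obtain ⟨f, hf, hf_zero, hf_ne⟩ := hchain.exists_tendstoUniformlyOn_prod_inv_eval
  obtain ⟨hsum, htsum⟩ := hchain.summable_and_tsum_radius_le fun k ↦ (hσ_mem k).2.le
  refine ⟨fun n ↦ (e n).2, fun n ↦ δ (e n).1, 1, fun n ↦ ∏ k ∈ Finset.range n, q k, f,
    diskUnion F δ, (e.surjective.iUnion_comp fun i ↦ ball (i.2 : ℂ) (δ i.1)).symm,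
    fun n ↦ (hchain.barrier _).radius_pos, e.summable_iff.2 hsum, ?_, ?_, ?_, ?_, ?_, ?_, ?_⟩
  · calc ∑' n, δ (e n).1 = ∑' i : Σ k, F k, δ i.1 :=
        e.tsum_eq fun i ↦ δ i.1
      _ ≤ 3 * r * (ε / (6 * r)) := htsum.trans (by gcongr)
      _ < ε := by field_simp; norm_num
  · intro n z hz
    simpa [eval_prod, Finset.prod_ne_zero_iff] using fun k _ ↦ hchain.eval_ne_zero hz k
  · simpa [eval_prod] using hf
  · exact fun z hz ↦ hf_zero z hz.2 fun k ↦ (hσ_mem k).2.le.trans (not_lt.1 hz.1)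
  · rintro z ⟨hz_lt, hz⟩
    obtain ⟨K, hK⟩ := (hσ_lim.eventually_const_lt hz_lt).exists
    exact hf_ne z hz K hK.le
  · exact hchain.diskUnion_subset fun k ↦ ⟨(le_max_right _ _).trans_lt (hσ_mem k).1, (hσ_mem k).2⟩
  · exact fun m n hmn ↦ (hchain.pairwise_disjoint_ball (e.injective.ne hmn)).inter_eq
end
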